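/- arXiv:1911.03234 — 2 statements merged into one kernel-verified Lean document; each statement's English description precedes it below -/
import Mathlib

section
/- Let k be a Hilbertian field of characteristic 0, and let f : Y → X be a quasi-finite morphism of separated schemes of finite type over k. Suppose that for every finite field extension h of k, the induced map Y(h) → X(h) on h-valued points is surjective. Then for every finitely generated field extension K of k, the induced map Y(K) → X(K) is surjective. -/
open AlgebraicGeometry CategoryTheory Polynomial

/-- A field `k` is *Hilbertian* if for every irreducible polynomial `F(t, X) ∈ k[t][X]`
which is separable and of positive degree in `X`, there are infinitely many `t₀ ∈ k`
such that the specialization `F(t₀, X) ∈ k[X]` is irreducible. -/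
def IsHilbertian (k : Type*) [Field k] : Prop :=
  ∀ F : Polynomial (Polynomial k), Irreducible F → F.Separable → 0 < F.natDegree →
    { t₀ : k | Irreducible (F.map (evalRingHom t₀)) }.Infinite

/-- The structure morphism `Spec L ⟶ Spec k` induced by a `k`-algebra structure on `L`. -/
noncomputable def specOver (k L : Type) [CommRing k] [CommRing L] [Algebra k L] :
    Spec (CommRingCat.of L) ⟶ Spec (CommRingCat.of k) :=
  Spec.map (CommRingCat.ofHom (algebraMap k L))

def IrrProp (F : Type) [Field F] : Prop :=
  ∀ Φ : F[X][X], Φ.Monic → Irreducible Φ →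
    {a : F | Irreducible (Φ.map (evalRingHom a))}.Infinite

def NoRootProp (F : Type) [Field F] : Prop :=
  ∀ f : F[X][X], f.Monic → (∀ p, ¬ f.IsRoot p) →
    {a : F | ∀ b, ¬ (f.map (evalRingHom a)).IsRoot b}.Infinite


open Polynomial in
noncomputable def shiftPoly {R : Type} [CommRing R] (Φ : R[X]) (d : R) : R[X] :=
  (Φ.scaleRoots d).comp (C d * X - 1)

theorem shiftPoly_map {R L : Type} [CommRing R] [Field L] (Φ : R[X]) (hΦ : Φ.Monic) (d : R)
    (θ : R →+* L) (hd : θ d ≠ 0) :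
    (shiftPoly Φ d).map θ =
      C (θ d ^ Φ.natDegree) * (Φ.map θ).comp (X - C (θ d)⁻¹) := by
  have h1 : (Φ.scaleRoots d).map θ = (Φ.map θ).scaleRoots (θ d) := by
    apply map_scaleRoots
    simp [hΦ.leadingCoeff]
  unfold shiftPoly
  rw [Polynomial.map_comp, h1]
  have h2 : (C d * X - 1 : R[X]).map θ = C (θ d) * (X - C (θ d)⁻¹) := by
    simp [mul_sub, ← C_mul, hd]
  rw [h2]
  have h3 := scaleRoots_eval₂_mul (p := Φ.map θ) (C : L →+* L[X]) (X - C (θ d)⁻¹) (θ d)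
  rw [hΦ.natDegree_map] at h3
  simp only [Polynomial.comp]
  rw [h3, C_pow]

theorem shiftPoly_dvd {R : Type} [CommRing R] (Φ : R[X]) (hΦ : Φ.Monic) (d : R) :
    C d ∣ shiftPoly Φ d - (-1) ^ Φ.natDegree := by
  rw [← Ideal.mem_span_singleton, ← Ideal.Quotient.eq_zero_iff_mem]
  set q := Ideal.Quotient.mk (Ideal.span {(C d : R[X])})
  have hd : q (C d) = 0 := Ideal.Quotient.eq_zero_iff_mem.2 (Ideal.mem_span_singleton_self _)
  unfold shiftPoly
  rw [map_sub, sub_eq_zero, Polynomial.comp, Polynomial.hom_eval₂, eval₂_eq_sum_range,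
    natDegree_scaleRoots, Finset.sum_range_succ, Finset.sum_eq_zero]
  · have : (Φ.coeff Φ.natDegree) = 1 := hΦ
    simp [coeff_scaleRoots, this, hd]
  · intro i hi
    have := Finset.mem_range.1 hi
    have h : Φ.natDegree - i ≠ 0 := by omega
    simp [coeff_scaleRoots, hd, h]


theorem clear_denoms {R Q : Type} [CommRing R] [IsDomain R] [Field Q] [Algebra R Q]
    [IsFractionRing R Q] (Φ : R[X]) (h : (Φ.map (algebraMap R Q)).Separable) :
    ∃ d : R, d ≠ 0 ∧ ∃ A B : R[X], A * Φ + B * derivative Φ = C d := by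
  obtain ⟨A, B, hAB⟩ := h
  obtain ⟨a, ha, hA⟩ := IsLocalization.integerNormalization_spec (nonZeroDivisors R) A
  obtain ⟨b, hb, hB⟩ := IsLocalization.integerNormalization_spec (nonZeroDivisors R) B
  refine ⟨a * b, mul_ne_zero (nonZeroDivisors.ne_zero ha) (nonZeroDivisors.ne_zero hb),
    C b * IsLocalization.integerNormalization (nonZeroDivisors R) A,
    C a * IsLocalization.integerNormalization (nonZeroDivisors R) B, ?_⟩
  apply Polynomial.map_injective _ (IsFractionRing.injective R Q)
  rw [derivative_map] at hAB
  have e : ∀ (r : R) (P : Q[X]), r • P = C (algebraMap R Q r) * P := by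
    intro r P
    rw [← smul_eq_C_mul, algebraMap_smul]
  simp only [Polynomial.map_add, Polynomial.map_mul, map_C, hA, hB, e, map_mul, C_mul]
  linear_combination C (algebraMap R Q a) * C (algebraMap R Q b) * hAB

theorem shiftPoly_coprime {R : Type} [CommRing R] (Φ : R[X]) (hΦ : Φ.Monic) (d : R) :
    IsCoprime (shiftPoly Φ d) (C d) := by
  obtain ⟨c, hc⟩ := shiftPoly_dvd Φ hΦ d
  refine ⟨(-1) ^ Φ.natDegree, - ((-1) ^ Φ.natDegree * c), ?_⟩
  have h1 : ((-1 : R[X]) ^ Φ.natDegree) * (-1) ^ Φ.natDegree = 1 := by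
    rw [← mul_pow]; simp
  linear_combination (-1) ^ Φ.natDegree * hc + h1

theorem shiftPoly_separable {R : Type} [CommRing R] (Φ : R[X]) (hΦ : Φ.Monic) (d : R)
    (A B : R[X]) (hAB : A * Φ + B * derivative Φ = C d) : (shiftPoly Φ d).Separable := by
  set G := shiftPoly Φ d with hG
  have hcop : IsCoprime G (C d) := shiftPoly_coprime Φ hΦ d
  unfold Polynomial.Separable
  rw [← Ideal.isCoprime_span_singleton_iff, Ideal.isCoprime_iff_sup_eq]
  by_contra hne
  obtain ⟨m, hm, hle⟩ := Ideal.exists_le_maximal _ hne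
  let L := R[X] ⧸ m
  let _ : Field L := Ideal.Quotient.field m
  let q : R[X] →+* L := Ideal.Quotient.mk m
  have hGm : q G = 0 := Ideal.Quotient.eq_zero_iff_mem.2
    (hle (Ideal.mem_sup_left (Ideal.mem_span_singleton_self _)))
  have hGm' : q (derivative G) = 0 := Ideal.Quotient.eq_zero_iff_mem.2
    (hle (Ideal.mem_sup_right (Ideal.mem_span_singleton_self _)))
  have hdm : q (C d) ≠ 0 := by
    intro h
    obtain ⟨u, v, huv⟩ := hcop
    have := congrArg q huv
    simp [hGm, h] at this
  let θ : R →+* L := q.comp C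
  have hθ : θ d ≠ 0 := hdm
  have hq : ∀ P : R[X], q P = (P.map θ).eval (q X) := by
    intro P
    rw [Polynomial.eval_map]
    conv_lhs => rw [← Polynomial.eval₂_C_X (p := P), Polynomial.hom_eval₂]
  have hmap := shiftPoly_map Φ hΦ d θ hθ
  have e1 : (Φ.map θ).eval (q X - (θ d)⁻¹) = 0 := by
    have := hq G
    rw [hGm, hG, hmap] at this
    simpa [hθ] using this
  have e2 : (derivative (Φ.map θ)).eval (q X - (θ d)⁻¹) = 0 := by
    have := hq (derivative G)
    rw [hGm', ← derivative_map, hG, hmap, derivative_C_mul, derivative_comp] at this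
    simpa [hθ] using this
  have := congrArg (fun P => (P.map θ).eval (q X - (θ d)⁻¹)) hAB
  simp only [Polynomial.map_add, Polynomial.map_mul, eval_add, eval_mul, e1, ← derivative_map, e2,
    map_C, eval_C, mul_zero, add_zero] at this
  exact hθ this.symm

theorem shiftPoly_irred_iff {R L : Type} [CommRing R] [Field L] (Φ : R[X]) (hΦ : Φ.Monic) (d : R)
    (θ : R →+* L) (hθ : θ d ≠ 0) :
    Irreducible ((shiftPoly Φ d).map θ) ↔ Irreducible (Φ.map θ) := by
  rw [shiftPoly_map Φ hΦ d θ hθ, irreducible_isUnit_mul]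
  · have : (Φ.map θ).comp (X - C (θ d)⁻¹) = algEquivAevalXAddC (-(θ d)⁻¹) (Φ.map θ) := by
      simp [Polynomial.comp, aeval_def, sub_eq_add_neg]
    rw [this, MulEquiv.irreducible_iff]
  · exact isUnit_C.2 (by simp [hθ])

theorem shiftPoly_natDegree {R Q : Type} [CommRing R] [IsDomain R] [Field Q] [Algebra R Q]
    [IsFractionRing R Q] (Φ : R[X]) (hΦ : Φ.Monic) (d : R) (hd0 : d ≠ 0) :
    (shiftPoly Φ d).natDegree = Φ.natDegree := by
  have hinj := IsFractionRing.injective R Q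
  have hθQ : algebraMap R Q d ≠ 0 := by simpa using hd0
  rw [← natDegree_map_eq_of_injective hinj, shiftPoly_map Φ hΦ d _ hθQ,
      natDegree_C_mul (pow_ne_zero _ hθQ), natDegree_comp, hΦ.natDegree_map]
  simp

theorem shiftPoly_isPrimitive {R Q : Type} [CommRing R] [IsDomain R] [Field Q] [Algebra R Q]
    [IsFractionRing R Q] (Φ : R[X]) (hΦ : Φ.Monic) (d : R) (hd0 : d ≠ 0) :
    (shiftPoly Φ d).IsPrimitive := by
  have hinj := IsFractionRing.injective R Q
  have hθQ : algebraMap R Q d ≠ 0 := by simpa using hd0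
  have hlead : (shiftPoly Φ d).leadingCoeff = d ^ Φ.natDegree := by
    apply hinj
    rw [← leadingCoeff_map_of_injective hinj, shiftPoly_map Φ hΦ d _ hθQ, leadingCoeff_mul,
      leadingCoeff_comp (by simp), (hΦ.map _).leadingCoeff]
    simp
  intro r hr
  have h1 : r ∣ d ^ Φ.natDegree := by
    rw [← hlead]
    exact (C_dvd_iff_dvd_coeff _ _).1 hr _
  have h2 : C r ∣ (C d) ^ Φ.natDegree := by
    rw [← C_pow]; exact map_dvd C h1
  have h3 : IsCoprime (shiftPoly Φ d) ((C d) ^ Φ.natDegree) :=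
    (shiftPoly_coprime Φ hΦ d).pow_right
  exact isUnit_C.1 (h3.isUnit_of_dvd' hr h2)

theorem irr_of_hilbertian (k : Type) [Field k] [CharZero k] (hk : IsHilbertian k) : IrrProp k := by
  intro Φ hΦ hirr
  have hn : 0 < Φ.natDegree := by
    rcases Nat.eq_zero_or_pos Φ.natDegree with h | h
    · exact absurd (by rw [hΦ.natDegree_eq_zero.1 h]; exact isUnit_one) hirr.not_isUnit
    · exact h
  have hirrQ : Irreducible (Φ.map (algebraMap k[X] (RatFunc k))) :=
    (hΦ.irreducible_iff_irreducible_map_fraction_map).1 hirr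
  have hsepQ : (Φ.map (algebraMap k[X] (RatFunc k))).Separable := hirrQ.separable
  obtain ⟨d, hd0, A, B, hAB⟩ := clear_denoms Φ hsepQ
  have hinj := IsFractionRing.injective k[X] (RatFunc k)
  have hθQ : algebraMap k[X] (RatFunc k) d ≠ 0 := by
    simpa using hd0
  have hirrG : Irreducible (shiftPoly Φ d) :=
    (shiftPoly_isPrimitive (Q := RatFunc k) Φ hΦ d
      hd0).irreducible_of_irreducible_map_of_injective hinj
      ((shiftPoly_irred_iff Φ hΦ d _ hθQ).2 hirrQ)
  have hinf := hk _ hirrG (shiftPoly_separable Φ hΦ d A B hAB)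
    (by rw [shiftPoly_natDegree (Q := RatFunc k) Φ hΦ d hd0]; exact hn)
  refine (hinf.sdiff (t := {a | d.IsRoot a}) ?_).mono ?_
  · exact Polynomial.finite_setOfPred_isRoot hd0
  · rintro a ⟨h1, h2⟩
    exact (shiftPoly_irred_iff Φ hΦ d (evalRingHom a) h2).1 h1

theorem loc_subring (F : Type) [Field F] (E : Type) [Field E] [Algebra F[X] E]
    [IsFractionRing F[X] E] (a : F) :
    ∃ (O : Subring E) (ρ : O →+* F),
      (∀ s : F[X], ∃ h : algebraMap F[X] E s ∈ O, ρ ⟨_, h⟩ = s.eval a) ∧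
      (∀ (z : E) (e s : F[X]), e.eval a ≠ 0 → algebraMap F[X] E e * z = algebraMap F[X] E s →
        z ∈ O) := by
  let m : Ideal F[X] := RingHom.ker (evalRingHom a)
  have hm : m.IsPrime := RingHom.ker_isPrime _
  have hu1 : ∀ y : m.primeCompl, IsUnit (evalRingHom a (y : F[X])) := fun y =>
    isUnit_iff_ne_zero.2 y.2
  have hu2 : ∀ y : m.primeCompl, IsUnit (algebraMap F[X] E (y : F[X])) := fun y => by
    refine isUnit_iff_ne_zero.2 fun h => y.2 ?_
    have : (y : F[X]) = 0 := by simpa using h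
    rw [this]; exact m.zero_mem
  let L := Localization.AtPrime m
  let ι : L →+* E := IsLocalization.lift hu2
  let ρ' : L →+* F := IsLocalization.lift hu1
  have hι : Function.Injective ι := by
    rw [IsLocalization.lift_injective_iff]
    intro x y
    constructor
    · intro h
      rw [(IsLocalization.injective L m.primeCompl_le_nonZeroDivisors h)]
    · intro h
      rw [IsFractionRing.injective F[X] E h]
  let e : L ≃+* ι.range := RingEquiv.ofBijective ι.rangeRestrict
    ⟨fun x y h => hι (congrArg Subtype.val h), ι.rangeRestrict_surjective⟩
  have hmem : ∀ s : F[X], ι (algebraMap _ L s) = algebraMap F[X] E s := fun s =>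
    IsLocalization.lift_eq hu2 s
  refine ⟨ι.range, ρ'.comp e.symm.toRingHom, fun s => ⟨⟨algebraMap _ L s, hmem s⟩, ?_⟩, ?_⟩
  · have : (⟨algebraMap F[X] E s, ⟨algebraMap _ L s, hmem s⟩⟩ : ι.range)
        = e (algebraMap _ L s) := Subtype.ext (hmem s).symm
    rw [this]
    simp [ρ', L]
  · intro z d s hd h
    refine ⟨IsLocalization.mk' L s (⟨d, hd⟩ : m.primeCompl), ?_⟩
    have hd' : algebraMap F[X] E d ≠ 0 := (hu2 ⟨d, hd⟩).ne_zero
    apply mul_left_cancel₀ hd'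
    rw [h, ← hmem d, ← hmem s, ← map_mul]
    congr 1
    rw [mul_comm]
    exact IsLocalization.mk'_spec L s (⟨d, hd⟩ : m.primeCompl)

theorem loc_subring_finset (F : Type) [Field F] (E : Type) [Field E] [Algebra F[X] E]
    [IsFractionRing F[X] E] (Q : Finset E) :
    {a : F | ¬ ∃ (O : Subring E) (ρ : O →+* F), (∀ z ∈ Q, z ∈ O) ∧
      (∀ s : F[X], ∃ h : algebraMap F[X] E s ∈ O, ρ ⟨_, h⟩ = s.eval a)}.Finite := by
  obtain ⟨b, hb⟩ := IsLocalization.exist_integer_multiples_of_finset (nonZeroDivisors F[X]) Q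
  refine (Polynomial.finite_setOfPred_isRoot (nonZeroDivisors.ne_zero b.2)).subset ?_
  intro a ha
  by_contra hroot
  apply ha
  obtain ⟨O, ρ, h1, h2⟩ := loc_subring F E a
  refine ⟨O, ρ, fun z hz => ?_, h1⟩
  obtain ⟨s, hs⟩ := hb z hz
  refine h2 z b s hroot ?_
  rw [hs, Algebra.smul_def]


theorem sp_aux (F : Type) [Field F] (E : Type) [Field E] [Algebra F[X] E]
    (N : Type) [Field N] [Algebra E N] (K : Submodule E N) (Z : Finset N)
    (y : N) (Φ : F[X][X]) (hΦm : Φ.Monic)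
    (hmin : Φ.map (algebraMap F[X] E) = minpoly E y)
    (P : N → E[X]) (hP : ∀ z, aeval y (P z) = z)
    (Λ : N → N →ₗ[E] E) (hΛ1 : ∀ z, z ∉ K → Λ z z ≠ 0)
    (hΛ2 : ∀ z, z ∉ K → ∀ c ∈ K, Λ z c = 0)
    (a : F) (ha : Irreducible (Φ.map (evalRingHom a)))
    (O : Subring E) (ρ : O →+* F)
    (hs : ∀ s : F[X], ∃ h : algebraMap F[X] E s ∈ O, ρ ⟨_, h⟩ = s.eval a)
    (hO1 : ∀ z ∈ Z, ∀ i, (P z).coeff i ∈ O)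
    (hO2 : ∀ z ∈ Z, ∀ i < Φ.natDegree, Λ z (y ^ i) ∈ O)
    (hO3 : ∀ z ∈ Z, (Λ z z)⁻¹ ∈ O) :
    ∃ (C : Subring N) (M : Type) (_ : Field M) (_ : Algebra F M) (_ : FiniteDimensional F M)
      (π : C →+* M), (∀ z ∈ Z, z ∈ C) ∧
      (∀ s : F[X], ∃ h : algebraMap E N (algebraMap F[X] E s) ∈ C,
        π ⟨_, h⟩ = algebraMap F M (s.eval a)) ∧
      (∀ z : C, (z : N) ∈ Z → (z : N) ∉ K → ∀ c : C, (c : N) ∈ K → π z ≠ π c) := by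
  -- coefficients in `O`
  let j : F[X] →+* O := (algebraMap F[X] E).codRestrict O (fun s => (hs s).choose)
  have hj : ∀ s, ρ (j s) = s.eval a := fun s => (hs s).choose_spec
  let ΦO : O[X] := Φ.map j
  have hΦO : ΦO.Monic := hΦm.map j
  have hΦOE : ΦO.map O.subtype = minpoly E y := by
    rw [← hmin, Polynomial.map_map]; rfl
  have hΦOa : ΦO.map ρ = Φ.map (evalRingHom a) := by
    rw [Polynomial.map_map]
    have : ρ.comp j = evalRingHom a := RingHom.ext hj
    rw [this]
  have hdeg : ΦO.natDegree = Φ.natDegree := hΦm.natDegree_map j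
  have : Fact (Irreducible (Φ.map (evalRingHom a))) := ⟨ha⟩
  let M := AdjoinRoot (Φ.map (evalRingHom a))
  have hΦam : (Φ.map (evalRingHom a)).Monic := hΦm.map _
  have hfin : FiniteDimensional F M := hΦam.finite_adjoinRoot
  let g : O[X] →+* N := eval₂RingHom ((algebraMap E N).comp O.subtype) y
  have hg : ∀ p, g p = aeval y (p.map O.subtype) := by
    intro p
    simp [g, aeval_def, eval₂_map]
  let q : O[X] →+* M := (AdjoinRoot.mk _).comp (mapRingHom ρ)
  have hgΦ : g ΦO = 0 := by rw [hg, hΦOE]; exact minpoly.aeval _ _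
  have hqΦ : q ΦO = 0 := by
    change AdjoinRoot.mk _ (ΦO.map ρ) = 0
    rw [hΦOa]; exact AdjoinRoot.mk_self
  have hker : RingHom.ker g.rangeRestrict ≤ RingHom.ker q := by
    intro p hp
    rw [RingHom.mem_ker] at hp ⊢
    have hp' : g p = 0 := congrArg Subtype.val hp
    have hdiv : ΦO ∣ p := by
      rw [hg] at hp'
      have := minpoly.dvd E y hp'
      rw [← hΦOE] at this
      exact (Polynomial.map_dvd_map _ O.subtype_injective hΦO).1 this
    obtain ⟨r, rfl⟩ := hdiv
    rw [map_mul, hqΦ, zero_mul]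
  let π : g.range →+* M := (g.rangeRestrict).liftOfSurjective g.rangeRestrict_surjective ⟨q, hker⟩
  have hπ : ∀ (p : O[X]) (h : g p ∈ g.range), π ⟨g p, h⟩ = q p := by
    intro p h
    exact RingHom.liftOfRightInverse_comp_apply (hf := Function.rightInverse_surjInv g.rangeRestrict_surjective) (g := ⟨q, hker⟩) _ _ p
  refine ⟨g.range, M, inferInstance, inferInstance, hfin, π, ?_, ?_, ?_⟩
  · intro z hz
    have : P z ∈ lifts O.subtype := by
      rw [lifts_iff_coeff_lifts]
      intro i
      exact ⟨⟨_, hO1 z hz i⟩, rfl⟩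
    obtain ⟨p, hp⟩ := this
    refine ⟨p, ?_⟩
    rw [hg]
    change aeval y (mapRingHom O.subtype p) = z
    rw [hp, hP]
  · intro s
    have e : g (C (j s)) = algebraMap E N (algebraMap F[X] E s) := by
      simp [g]; rfl
    refine ⟨⟨_, e⟩, ?_⟩
    have := hπ (C (j s)) ⟨_, rfl⟩
    simp only [e] at this
    rw [this]
    change AdjoinRoot.mk _ ((C (j s)).map ρ) = _
    rw [map_C, hj]
    rfl
  · intro z hzZ hzK c hc heq
    obtain ⟨p₀, hp₀⟩ := (z - c).2
    let p := p₀ %ₘ ΦO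
    have hgp : g p = z - c := by
      have : g p₀ = g p := by
        conv_lhs => rw [← modByMonic_add_div p₀ ΦO]
        rw [map_add, map_mul, hgΦ, zero_mul, add_zero]
      rw [← this, hp₀]; rfl
    have hpdeg : p.degree < ΦO.degree := degree_modByMonic_lt _ hΦO
    have hqp : q p = 0 := by
      rw [← hπ p ⟨_, rfl⟩]
      have : (⟨g p, ⟨_, rfl⟩⟩ : g.range) = z - c := Subtype.ext hgp
      rw [this, map_sub, heq, sub_self]
    have hpρ : p.map ρ = 0 := by
      have h1 : Φ.map (evalRingHom a) ∣ p.map ρ := AdjoinRoot.mk_eq_zero.1 hqp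
      refine eq_zero_of_dvd_of_degree_lt h1 ?_
      rw [← hΦOa, hΦO.degree_map]
      exact degree_map_le.trans_lt hpdeg
    have hcoef : ∀ i, ρ (p.coeff i) = 0 := by
      intro i
      rw [← coeff_map, hpρ, coeff_zero]
    have hnd : p.natDegree < Φ.natDegree ∨ p = 0 := by
      by_cases h0 : p = 0
      · exact Or.inr h0
      · left; rw [← hdeg]; exact natDegree_lt_natDegree h0 hpdeg
    have hsum : (z : N) - c = ∑ i ∈ Finset.range Φ.natDegree, (p.coeff i : E) • y ^ i := by
      rw [← hgp]
      have : p = ∑ i ∈ Finset.range Φ.natDegree, C (p.coeff i) * X ^ i := by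
        rcases hnd with h | h
        · exact as_sum_range_C_mul_X_pow' p h
        · simp [h]
      conv_lhs => rw [this]
      rw [map_sum]
      refine Finset.sum_congr rfl fun i _ => ?_
      simp [g, Algebra.smul_def]
    have hlam : Λ z z = ∑ i ∈ Finset.range Φ.natDegree, (p.coeff i : E) * Λ z (y ^ i) := by
      have h1 := congrArg (Λ z) hsum
      rw [map_sub, hΛ2 z hzK c hc, sub_zero, map_sum] at h1
      simpa using h1
    have h1 : (1 : O) = ∑ i ∈ (Finset.range Φ.natDegree).attach,
        p.coeff i * (⟨Λ z (y ^ (i : ℕ)), hO2 z hzZ i (Finset.mem_range.1 i.2)⟩ *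
          ⟨(Λ z z)⁻¹, hO3 z hzZ⟩) := by
      apply Subtype.ext
      have h2 : Λ z z * (Λ z z)⁻¹ = 1 := mul_inv_cancel₀ (hΛ1 z hzK)
      conv at h2 =>
        lhs; lhs; rw [hlam]
      rw [Finset.sum_mul, ← Finset.sum_attach] at h2
      push_cast
      rw [← h2]
      refine Finset.sum_congr rfl fun i _ => by ring
    have h3 := congrArg ρ h1
    rw [map_one, map_sum, Finset.sum_eq_zero] at h3
    · exact one_ne_zero h3
    · intro i _
      rw [map_mul, hcoef, zero_mul]


theorem sp_fin (F : Type) [Field F] [CharZero F] (hF : IrrProp F) (E : Type) [Field E]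
    [Algebra F[X] E] [IsFractionRing F[X] E]
    (N : Type) [Field N] [Algebra E N] [FiniteDimensional E N] (K : Submodule E N) (Z : Finset N) :
    {a : F | ∃ (C : Subring N) (M : Type) (_ : Field M) (_ : Algebra F M)
      (_ : FiniteDimensional F M)
      (π : C →+* M), (∀ z ∈ Z, z ∈ C) ∧
      (∀ s : F[X], ∃ h : algebraMap E N (algebraMap F[X] E s) ∈ C,
        π ⟨_, h⟩ = algebraMap F M (s.eval a)) ∧
      (∀ z : C, (z : N) ∈ Z → (z : N) ∉ K → ∀ c : C, (c : N) ∈ K → π z ≠ π c)}.Infinite := by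
  classical
  let _ : Algebra F[X] N := ((algebraMap E N).comp (algebraMap F[X] E)).toAlgebra
  have : IsScalarTower F[X] E N := IsScalarTower.of_algebraMap_eq (fun _ => rfl)
  have : CharZero F[X] := inferInstance
  have : CharZero E := charZero_of_injective_algebraMap (IsFractionRing.injective F[X] E)
  have hfs : FaithfulSMul F[X] N := by
    rw [faithfulSMul_iff_algebraMap_injective]
    exact (algebraMap E N).injective.comp (IsFractionRing.injective F[X] E)
  obtain ⟨y, hyint, hytop⟩ : ∃ y : N, IsIntegral F[X] y ∧ Algebra.adjoin E {y} = ⊤ := by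
    obtain ⟨y, hy⟩ := Field.exists_primitive_element E N
    have hyi : IsIntegral E y := Algebra.IsIntegral.isIntegral y
    obtain ⟨m, hm⟩ := IsIntegral.exists_multiple_integral_of_isLocalization
      (nonZeroDivisors F[X]) y hyi
    refine ⟨m • y, hm, ?_⟩
    have hy' : Algebra.adjoin E {y} = ⊤ := by
      rw [← IntermediateField.adjoin_simple_toSubalgebra_of_isAlgebraic hyi.isAlgebraic, hy]
      rfl
    rw [eq_top_iff, ← hy', Algebra.adjoin_le_iff, Set.singleton_subset_iff]
    have hm0 : algebraMap F[X] E (m : F[X]) ≠ 0 := by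
      simp
    have : y = (algebraMap F[X] E (m : F[X]))⁻¹ • (m • y) := by
      change y = (algebraMap F[X] E (m : F[X]))⁻¹ • ((m : F[X]) • y)
      rw [← algebraMap_smul E (m : F[X]) y, smul_smul, inv_mul_cancel₀ hm0, one_smul]
    have key := Subalgebra.smul_mem (Algebra.adjoin E {m • y})
      (Algebra.subset_adjoin (Set.mem_singleton _)) (algebraMap F[X] E (m : F[X]))⁻¹
    rw [← this] at key
    exact key
  set Φ := minpoly F[X] y with hΦ
  have hΦm : Φ.Monic := minpoly.monic hyint
  have hΦi : Irreducible Φ := minpoly.irreducible hyint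
  have hmin : Φ.map (algebraMap F[X] E) = minpoly E y :=
    (minpoly.isIntegrallyClosed_eq_field_fractions E N hyint).symm
  have hPex : ∀ z : N, ∃ p : E[X], aeval y p = z := by
    intro z
    have : z ∈ Algebra.adjoin E {y} := by rw [hytop]; trivial
    rw [Algebra.adjoin_singleton_eq_range_aeval] at this
    exact this
  choose P hP using hPex
  have hΛex : ∀ z : N, ∃ l : N →ₗ[E] E, z ∉ K → (l z ≠ 0 ∧ ∀ c ∈ K, l c = 0) := by
    intro z
    by_cases h : z ∈ K
    · exact ⟨0, fun h' => absurd h h'⟩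
    · obtain ⟨l, h1, h2⟩ := Submodule.exists_le_ker_of_notMem h
      exact ⟨l, fun _ => ⟨h1, fun c hc => h2 hc⟩⟩
  choose Λ hΛ using hΛex
  let Q : Finset E := (Z.biUnion fun z => (P z).coeffs) ∪ {0} ∪
    (Z.biUnion fun z => (Finset.range Φ.natDegree).image fun i => Λ z (y ^ i)) ∪
    (Z.image fun z => (Λ z z)⁻¹)
  refine ((hF Φ hΦm hΦi).sdiff (loc_subring_finset F E Q)).mono ?_
  rintro a ⟨ha, hO⟩
  simp only [Set.mem_ofPred_eq, not_not] at hO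
  obtain ⟨O, ρ, hQ, hs⟩ := hO
  refine sp_aux F E N K Z y Φ hΦm hmin P hP Λ (fun z hz => (hΛ z hz).1)
    (fun z hz => (hΛ z hz).2) a ha O ρ hs ?_ ?_ ?_
  · intro z hz i
    by_cases h : (P z).coeff i = 0
    · rw [h]; exact O.zero_mem
    · apply hQ
      simp only [Q, Finset.mem_union, Finset.mem_biUnion]
      exact Or.inl (Or.inl (Or.inl ⟨z, hz, coeff_mem_coeffs h⟩))
  · intro z hz i hi
    apply hQ
    simp only [Q, Finset.mem_union, Finset.mem_biUnion, Finset.mem_image, Finset.mem_range]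
    exact Or.inl (Or.inr ⟨z, hz, i, hi, rfl⟩)
  · intro z hz
    apply hQ
    simp only [Q, Finset.mem_union, Finset.mem_biUnion, Finset.mem_image, Finset.mem_range]
    exact Or.inr ⟨z, hz, rfl⟩

theorem sp_alg (F : Type) [Field F] [CharZero F] (hF : IrrProp F) (E : Type) [Field E]
    [Algebra F[X] E] [IsFractionRing F[X] E]
    (Ω : Type) [Field Ω] [Algebra E Ω] [Algebra.IsAlgebraic E Ω] (K : IntermediateField E Ω)
    [FiniteDimensional E K] (Z : Finset Ω) :
    {a : F | ∃ (C : Subring Ω) (M : Type) (_ : Field M) (_ : Algebra F M)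
      (_ : FiniteDimensional F M)
      (π : C →+* M), (∀ z ∈ Z, z ∈ C) ∧
      (∀ s : F[X], ∃ h : algebraMap E Ω (algebraMap F[X] E s) ∈ C,
        π ⟨_, h⟩ = algebraMap F M (s.eval a)) ∧
      (∀ z : C, (z : Ω) ∈ Z → (z : Ω) ∉ K → ∀ c : C, (c : Ω) ∈ K → π z ≠ π c) ∧
      (∀ z : C, (z : Ω) ∈ Z → (z : Ω) ≠ 0 → π z ≠ 0)}.Infinite := by
  classical
  have : FiniteDimensional E (IntermediateField.adjoin E (Z : Set Ω)) :=
    IntermediateField.finiteDimensional_adjoin (fun x _ => Algebra.IsIntegral.isIntegral x)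
  let N : IntermediateField E Ω := IntermediateField.adjoin E (Z : Set Ω) ⊔ K
  have : FiniteDimensional E N := IntermediateField.finiteDimensional_sup _ _
  have hZN : ∀ z ∈ Z, z ∈ N := fun z hz =>
    (le_sup_left : _ ≤ N) (IntermediateField.subset_adjoin E _ hz)
  have hKN : K ≤ N := le_sup_right
  let K' : Submodule E N := (Subalgebra.toSubmodule K.toSubalgebra).comap N.val.toLinearMap
  let Z₁ : Finset N := Z.attach.image fun z => ⟨z.1, hZN z.1 z.2⟩
  let Z' : Finset N := Z₁ ∪ Z₁.image fun z => z⁻¹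
  refine (sp_fin F hF E N K' Z').mono ?_
  rintro a ⟨C, M, i1, i2, i3, π, h1, h2, h3⟩
  let ν : C →+* Ω := (algebraMap N Ω).comp C.subtype
  have hν : Function.Injective ν := (algebraMap N Ω).injective.comp C.subtype_injective
  let e : C ≃+* ν.range := RingEquiv.ofBijective ν.rangeRestrict
    ⟨fun x y h => hν (congrArg (fun w : ν.range => (w : Ω)) h), ν.rangeRestrict_surjective⟩
  have he : ∀ z : ν.range, (algebraMap N Ω ((e.symm z : C) : N)) = z := by
    intro z
    exact congrArg Subtype.val (e.apply_symm_apply z)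
  have hZ₁ : ∀ z : N, (z : Ω) ∈ Z → z ∈ Z₁ := by
    intro z hz
    exact Finset.mem_image.2 ⟨⟨z, hz⟩, Finset.mem_attach _ _, rfl⟩
  refine ⟨ν.range, M, i1, i2, i3, π.comp e.symm.toRingHom, ?_, ?_, ?_, ?_⟩
  · intro z hz
    have : (⟨z, hZN z hz⟩ : N) ∈ C := h1 _ (Finset.mem_union_left _ (hZ₁ _ hz))
    exact ⟨⟨_, this⟩, rfl⟩
  · intro s
    obtain ⟨h, hs⟩ := h2 s
    refine ⟨⟨⟨_, h⟩, rfl⟩, ?_⟩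
    rw [← hs]
    change π (e.symm _) = _
    congr 1
    rw [RingEquiv.symm_apply_eq]
    rfl
  · intro z hz hzK c hc
    refine h3 (e.symm z) (Finset.mem_union_left _ (hZ₁ _ ?_)) ?_ (e.symm c) ?_
    · rw [← he z] at hz; exact hz
    · rw [← he z] at hzK; exact hzK
    · rw [← he c] at hc; exact hc
  · intro z hz hz0 h0
    have hz1 : ((e.symm z : C) : N) ∈ Z₁ := by
      rw [← he z] at hz; exact hZ₁ _ hz
    have hinv : (((e.symm z : C) : N))⁻¹ ∈ C :=
      h1 _ (Finset.mem_union_right _ (Finset.mem_image.2 ⟨_, hz1, rfl⟩))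
    have hne : ((e.symm z : C) : N) ≠ 0 := by
      intro h
      apply hz0
      rw [← he z, h, map_zero]
    have : (e.symm z : C) * ⟨_, hinv⟩ = 1 := Subtype.ext (mul_inv_cancel₀ hne)
    have h4 := congrArg π this
    rw [map_mul, map_one] at h4
    change π (e.symm z) = 0 at h0
    rw [h0, zero_mul] at h4
    exact zero_ne_one h4


theorem exists_root_multiset {Ω : Type} [Field Ω] [IsAlgClosed Ω] (C' : Subring Ω)
    (f : C'[X]) (hf : f.Monic) (hroots : ∀ z : Ω, (f.map C'.subtype).IsRoot z → z ∈ C') :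
    ∃ s : Multiset C', f = (s.map fun z => X - C z).prod := by
  have hsplit := (IsAlgClosed.splits (f.map C'.subtype)).eq_prod_roots_of_monic (hf.map _)
  have h : ∀ z ∈ (f.map C'.subtype).roots, z ∈ C' := fun z hz => hroots z (isRoot_of_mem_roots hz)
  refine ⟨(f.map C'.subtype).roots.attach.map fun z => ⟨z.1, h z.1 z.2⟩, ?_⟩
  apply Polynomial.map_injective _ C'.subtype_injective
  conv_lhs => rw [hsplit]
  rw [Polynomial.map_multiset_prod, Multiset.map_map, Multiset.map_map]
  simp only [Function.comp_def, Polynomial.map_sub, map_X, map_C, Subring.subtype_apply]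
  rw [Multiset.attach_map_val' (f := fun z => X - C z)]

theorem root_lift {Ω M : Type} [Field Ω] [IsAlgClosed Ω] [Field M] (C' : Subring Ω) (π : C' →+* M)
    (f : C'[X]) (hf : f.Monic) (hroots : ∀ z : Ω, (f.map C'.subtype).IsRoot z → z ∈ C')
    (β : M) (hβ : (f.map π).IsRoot β) : ∃ z : C', f.IsRoot z ∧ π z = β := by
  obtain ⟨s, hs⟩ := exists_root_multiset C' f hf hroots
  rw [hs, Polynomial.map_multiset_prod, Multiset.map_map, IsRoot, eval_multiset_prod,
    Multiset.prod_eq_zero_iff, Multiset.map_map] at hβ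
  obtain ⟨z, hz, h⟩ := Multiset.mem_map.1 hβ
  refine ⟨z, ?_, ?_⟩
  · rw [hs, IsRoot, eval_multiset_prod, Multiset.prod_eq_zero_iff, Multiset.map_map]
    exact Multiset.mem_map.2 ⟨z, hz, by simp⟩
  · simp [sub_eq_zero] at h
    exact h.symm

theorem eval_eval_C {F : Type} [Field F] (f : F[X][X]) (a b : F) :
    (f.eval (C b)).eval a = (f.map (evalRingHom a)).eval b := by
  have := Polynomial.eval_map_apply (f := evalRingHom a) (p := f) (x := C b)
  simp at this
  rw [this]

theorem noRoot_of_irr (F : Type) [Field F] [CharZero F] (hF : IrrProp F) : NoRootProp F := by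
  classical
  intro f hf hroot
  let E := RatFunc F
  let Ω := AlgebraicClosure E
  let jΩ : F[X] →+* Ω := (algebraMap E Ω).comp (algebraMap F[X] E)
  let Z : Finset Ω := (f.map jΩ).roots.toFinset
  refine (sp_alg F hF E Ω ⊥ Z).mono ?_
  rintro a ⟨C', M, _, _, _, π, h1, h2, h3, -⟩ b hb
  let j : F[X] →+* C' := jΩ.codRestrict C' (fun s => (h2 s).choose)
  have hj : ∀ s, π (j s) = algebraMap F M (s.eval a) := fun s => (h2 s).choose_spec
  have hfΩ : (f.map j).map C'.subtype = f.map jΩ := by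
    rw [Polynomial.map_map]; rfl
  have hne : f.map jΩ ≠ 0 := (hf.map _).ne_zero
  obtain ⟨z, hz, hzb⟩ := root_lift C' π (f.map j) (hf.map _) (by
    intro z hz
    rw [hfΩ] at hz
    exact h1 z (Multiset.mem_toFinset.2 ((mem_roots hne).2 hz))) (algebraMap F M b) (by
    have : π.comp j = (algebraMap F M).comp (evalRingHom a) := RingHom.ext hj
    rw [Polynomial.map_map, this, ← Polynomial.map_map]
    exact hb.map)
  have hzΩ : (f.map jΩ).IsRoot z := by
    rw [← hfΩ]; exact hz.map
  have hzZ : (z : Ω) ∈ Z := Multiset.mem_toFinset.2 ((mem_roots hne).2 hzΩ)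
  refine h3 z hzZ ?_ (j (C b)) ?_ ?_
  · intro hbot
    obtain ⟨e, he⟩ := IntermediateField.mem_bot.1 hbot
    have hroote : (f.map (algebraMap F[X] E)).IsRoot e := by
      have h : ((f.map (algebraMap F[X] E)).map (algebraMap E Ω)).IsRoot (algebraMap E Ω e) := by
        rw [Polynomial.map_map, he]; exact hzΩ
      exact h.of_map (algebraMap E Ω).injective
    obtain ⟨p, rfl⟩ := IsIntegrallyClosed.isIntegral_iff.1 (show IsIntegral F[X] e from
      ⟨f, hf, by rw [← Polynomial.eval_map]; exact hroote⟩)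
    exact hroot p (hroote.of_map (IsFractionRing.injective F[X] E))
  · exact IntermediateField.mem_bot.2 ⟨_, rfl⟩
  · rw [hzb, hj]; simp


theorem multiset_le_map {α β : Type} (f : α → β) (s : Multiset α) (t : Multiset β)
    (h : t ≤ s.map f) : ∃ I ≤ s, I.map f = t := by
  induction s using Quotient.inductionOn with | _ s => ?_
  induction t using Quotient.inductionOn with | _ t => ?_
  obtain ⟨l, hl, hl'⟩ := h
  obtain ⟨l', h1, rfl⟩ := List.sublist_map_iff.1 hl'
  exact ⟨l', Multiset.coe_le.2 h1.subperm, Multiset.coe_eq_coe.2 hl⟩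

section Places

variable (F : Type) [Field F] (Ω : Type) [Field Ω] [Algebra F[X] Ω] [FaithfulSMul F[X] Ω]

theorem exists_place (a : F) : ∃ (L : Type) (_ : Field L)
    (π : (integralClosure F[X] Ω) →+* L), π (algebraMap F[X] _ (X - C a)) = 0 := by
  have hp : (Ideal.span {(X - C a : F[X])}).IsPrime :=
    (Ideal.span_singleton_prime (X_sub_C_ne_zero a)).2 (prime_X_sub_C a)
  obtain ⟨Q, -, hQ, hQ'⟩ := Ideal.exists_ideal_over_prime_of_isIntegral
    (S := integralClosure F[X] Ω) (Ideal.span {(X - C a : F[X])}) ⊥ (by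
      intro x hx
      have : x = 0 := by
        have h : algebraMap F[X] (integralClosure F[X] Ω) x = 0 := hx
        have h2 := congrArg Subtype.val h
        exact (FaithfulSMul.algebraMap_injective F[X] Ω) (by rw [map_zero]; exact h2)
      rw [this]; exact Ideal.zero_mem _)
  refine ⟨FractionRing ((integralClosure F[X] Ω) ⧸ Q), inferInstance,
    (algebraMap _ _).comp (Ideal.Quotient.mk Q), ?_⟩
  have : algebraMap F[X] (integralClosure F[X] Ω) (X - C a) ∈ Q := by
    rw [← Ideal.mem_comap, hQ']
    exact Ideal.mem_span_singleton_self _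
  rw [RingHom.comp_apply, Ideal.Quotient.eq_zero_iff_mem.2 this, map_zero]

variable {F Ω}

theorem place_eval {L : Type} [Field L] {a : F} (π : (integralClosure F[X] Ω) →+* L)
    (hπ : π (algebraMap F[X] _ (X - C a)) = 0) (s : F[X]) :
    π (algebraMap F[X] _ s) = π (algebraMap F[X] _ (C (s.eval a))) := by
  obtain ⟨q, hq⟩ : X - C a ∣ s - C (s.eval a) := X_sub_C_dvd_sub_C_eval
  rw [← sub_eq_zero, ← map_sub, ← map_sub, hq, map_mul, map_mul, hπ, zero_mul]

theorem place_injective {L : Type} [Field L] (π : (integralClosure F[X] Ω) →+* L) :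
    Function.Injective ((π.comp (algebraMap F[X] _)).comp C) := RingHom.injective _

theorem noRoot_places [CharZero F] (hF : NoRootProp F) (Z : Finset (integralClosure F[X] Ω)) :
    {a : F | ∀ (L : Type) [Field L] (π : (integralClosure F[X] Ω) →+* L),
      π (algebraMap F[X] _ (X - C a)) = 0 → ∀ z ∈ Z,
      (z ∉ Set.range (algebraMap F[X] (integralClosure F[X] Ω))) →
      ∀ b : F, π z ≠ π (algebraMap F[X] _ (C b))}.Infinite := by
  classical
  let Z' := Z.filter fun z => z ∉ Set.range (algebraMap F[X] (integralClosure F[X] Ω))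
  have hint : ∀ z : integralClosure F[X] Ω, IsIntegral F[X] z :=
    fun z => Algebra.IsIntegral.isIntegral z
  let g : F[X][X] := ∏ z ∈ Z', minpoly F[X] z
  have hgm : g.Monic := monic_prod_of_monic _ _ fun z _ => minpoly.monic (hint z)
  have hgr : ∀ p, ¬ g.IsRoot p := by
    intro p hp
    rw [IsRoot, eval_prod, Finset.prod_eq_zero_iff] at hp
    obtain ⟨z, hz, hp⟩ := hp
    apply (Finset.mem_filter.1 hz).2
    refine ⟨p, ?_⟩
    have hirr := minpoly.irreducible (hint z)
    obtain ⟨q, hq⟩ := dvd_iff_isRoot.2 hp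
    have hqu : IsUnit q := (hirr.isUnit_or_isUnit hq).resolve_left (not_isUnit_X_sub_C p)
    have h0 := minpoly.aeval F[X] z
    rw [hq, map_mul] at h0
    have h1 := (IsUnit.mul_left_eq_zero (hqu.map (aeval z))).1 h0
    simp [sub_eq_zero] at h1
    exact h1.symm
  refine (hF g hgm hgr).mono ?_
  intro a ha L _ π hπ z hz hzr b heq
  apply ha b
  rw [Polynomial.map_prod, IsRoot, eval_prod, Finset.prod_eq_zero_iff]
  refine ⟨z, Finset.mem_filter.2 ⟨hz, hzr⟩, ?_⟩
  rw [← eval_eval_C]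
  apply place_injective π
  rw [map_zero]
  change π (algebraMap F[X] _ (C _)) = 0
  rw [← place_eval π hπ]
  have h1 : π (aeval z (minpoly F[X] z)) = 0 := by rw [minpoly.aeval, map_zero]
  rw [aeval_def, hom_eval₂, heq] at h1
  rw [← h1]
  exact (Polynomial.eval₂_at_apply (π.comp (algebraMap F[X] _)) (C b)).symm

theorem map_place {L : Type} [Field L] {a : F} (π : (integralClosure F[X] Ω) →+* L)
    (hπ : π (algebraMap F[X] _ (X - C a)) = 0) (f : F[X][X]) :
    (f.map (algebraMap F[X] (integralClosure F[X] Ω))).map π =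
      (f.map (evalRingHom a)).map ((π.comp (algebraMap F[X] _)).comp C) := by
  rw [Polynomial.map_map, Polynomial.map_map]
  congr 1
  ext1
  · ext x; simp
  · simpa using place_eval π hπ X

theorem ic_root_mem (f : F[X][X]) (hf : f.Monic) (z : Ω)
    (hz : ((f.map (algebraMap F[X] (integralClosure F[X] Ω))).map
      (integralClosure F[X] Ω).toSubring.subtype).IsRoot z) :
    z ∈ (integralClosure F[X] Ω).toSubring := by
  refine ⟨f, hf, ?_⟩
  rw [Polynomial.map_map, IsRoot, Polynomial.eval_map] at hz
  exact hz

end Places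

theorem irr_of_noRoot (F : Type) [Field F] [CharZero F] (hF : NoRootProp F) : IrrProp F := by
  classical
  intro Φ hΦ hirr
  let Ω := AlgebraicClosure (RatFunc F)
  let IC := integralClosure F[X] Ω
  have hfs : FaithfulSMul F[X] Ω := by
    rw [faithfulSMul_iff_algebraMap_injective, IsScalarTower.algebraMap_eq F[X] (RatFunc F) Ω]
    exact (algebraMap (RatFunc F) Ω).injective.comp (IsFractionRing.injective F[X] (RatFunc F))
  have hinj : Function.Injective (algebraMap F[X] IC) := FaithfulSMul.algebraMap_injective _ _
  obtain ⟨s, hs⟩ : ∃ s : Multiset IC, Φ.map (algebraMap F[X] IC) = (s.map fun z => X - C z).prod :=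
    exists_root_multiset IC.toSubring (Φ.map (algebraMap F[X] IC)) (hΦ.map _) (ic_root_mem Φ hΦ)
  let Z : Finset IC := s.powerset.toFinset.biUnion fun I =>
    ((I.map fun z => X - C z).prod : IC[X]).coeffs
  refine (noRoot_places (Ω := Ω) hF Z).mono ?_
  intro a ha
  obtain ⟨L, _, π, hπ⟩ := exists_place F Ω a
  have hΦa : (Φ.map (evalRingHom a)).Monic := hΦ.map _
  have hΦ1 : Φ ≠ 1 := fun h => hirr.not_isUnit (by rw [h]; exact isUnit_one)
  change Irreducible _
  rw [hΦa.irreducible_iff_natDegree]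
  refine ⟨fun h => hΦ1 ?_, ?_⟩
  · rw [← hΦ.natDegree_eq_zero, ← hΦ.natDegree_map (evalRingHom a), h, natDegree_one]
  intro g h hg hh hgh
  let ε : F →+* L := (π.comp (algebraMap F[X] IC)).comp C
  have hprod : (Φ.map (evalRingHom a)).map ε = ((s.map π).map fun z => X - C z).prod := by
    rw [← map_place π hπ, hs, Polynomial.map_multiset_prod, Multiset.map_map, Multiset.map_map]
    simp [Function.comp_def]
    rfl
  have hgdvd : g.map ε ∣ (Φ.map (evalRingHom a)).map ε := by
    rw [← hgh, Polynomial.map_mul]; exact dvd_mul_right _ _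
  have hne : (Φ.map (evalRingHom a)).map ε ≠ 0 := (hΦa.map _).ne_zero
  have hroots : ((Φ.map (evalRingHom a)).map ε).roots = s.map π := by
    rw [hprod, roots_multiset_prod_X_sub_C]
  have hsplit : (g.map ε).Splits := by
    refine Splits.of_dvd ?_ hne hgdvd
    rw [hprod]
    exact Splits.multisetProd (by
      intro f hf
      obtain ⟨z, -, rfl⟩ := Multiset.mem_map.1 hf
      exact Splits.X_sub_C z)
  have hgprod := hsplit.eq_prod_roots_of_monic (hg.map ε)
  have hle : (g.map ε).roots ≤ s.map π := by
    rw [← hroots]; exact roots.le_of_dvd hne hgdvd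
  obtain ⟨I, hI, hIr⟩ := multiset_le_map π s _ hle
  let G : IC[X] := (I.map fun z => X - C z).prod
  have hGm : G.Monic := monic_multiset_prod_of_monic _ _ fun z _ => monic_X_sub_C z
  have hGπ : G.map π = g.map ε := by
    rw [hgprod, ← hIr]
    simp [G, Polynomial.map_multiset_prod, Multiset.map_map, Function.comp_def]
  have hcoef : ∀ i, G.coeff i ∈ Set.range (algebraMap F[X] IC) := by
    intro i
    by_contra hni
    have hi0 : G.coeff i ≠ 0 := fun h0 => hni ⟨0, by rw [h0, map_zero]⟩
    have hmem : G.coeff i ∈ Z := by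
      refine Finset.mem_biUnion.2 ⟨I, ?_, coeff_mem_coeffs hi0⟩
      rw [Multiset.mem_toFinset, Multiset.mem_powerset]; exact hI
    apply ha L π hπ _ hmem hni (g.coeff i)
    rw [← Polynomial.coeff_map, hGπ, Polynomial.coeff_map]
    rfl
  obtain ⟨G₀, hG₀⟩ : ∃ G₀ : F[X][X], G₀.map (algebraMap F[X] IC) = G := by
    have : G ∈ lifts (algebraMap F[X] IC) := (lifts_iff_coeff_lifts _).2 hcoef
    exact this
  have hG₀m : G₀.Monic := monic_of_injective hinj (by rw [hG₀]; exact hGm)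
  have hdvd : G₀ ∣ Φ := by
    rw [← Polynomial.map_dvd_map _ hinj hG₀m, hG₀, hs]
    exact Multiset.prod_dvd_prod_of_le (Multiset.map_le_map hI)
  have hdeg : G₀.natDegree = g.natDegree := by
    rw [← hG₀m.natDegree_map (algebraMap F[X] IC), hG₀, ← hGm.natDegree_map π, hGπ, hg.natDegree_map]
  obtain ⟨H₀, hH₀⟩ := hdvd
  have hH₀m : H₀.Monic := hG₀m.of_mul_monic_left (by rw [← hH₀]; exact hΦ)
  have hdeg2 : g.natDegree + h.natDegree = G₀.natDegree + H₀.natDegree := by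
    rw [← hG₀m.natDegree_mul hH₀m, ← hH₀, ← hΦ.natDegree_map (evalRingHom a), ← hgh,
      hg.natDegree_mul hh]
  rcases hirr.isUnit_or_isUnit hH₀ with hu | hu
  · left; rw [← hdeg]
    rw [hG₀m.natDegree_eq_zero]
    exact hG₀m.eq_one_of_isUnit hu
  · right
    have : H₀.natDegree = 0 := by
      rw [hH₀m.natDegree_eq_zero]; exact hH₀m.eq_one_of_isUnit hu
    omega


theorem natDegree_root_le {F : Type} [Field F] (g : F[X][X]) (hg : g.Monic) (D : ℕ)
    (hD : ∀ i, (g.coeff i).natDegree ≤ D) (b : F[X]) (hb : g.IsRoot b) : b.natDegree ≤ D := by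
  rcases Nat.eq_zero_or_pos g.natDegree with h0 | hpos
  · rw [hg.natDegree_eq_zero] at h0
    rw [h0] at hb; simp [IsRoot] at hb
  rw [IsRoot, eval_eq_sum_range, Finset.sum_range_succ, hg.coeff_natDegree, one_mul] at hb
  have h1 : b ^ g.natDegree = - ∑ i ∈ Finset.range g.natDegree, g.coeff i * b ^ i := by
    rw [eq_neg_iff_add_eq_zero, add_comm]; exact hb
  have h2 : (b ^ g.natDegree).natDegree ≤ D + (g.natDegree - 1) * b.natDegree := by
    rw [h1, natDegree_neg]
    apply natDegree_sum_le_of_forall_le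
    intro i hi
    refine (natDegree_mul_le).trans (Nat.add_le_add (hD i) ?_)
    rw [natDegree_pow]
    exact Nat.mul_le_mul_right _ (by have := Finset.mem_range.1 hi; omega)
  rw [natDegree_pow] at h2
  obtain ⟨m, hm⟩ : ∃ m, g.natDegree = m + 1 := ⟨g.natDegree - 1, by omega⟩
  rw [hm] at h2
  simp only [Nat.add_sub_cancel] at h2
  nlinarith

theorem exists_degree_bound {F : Type} [Field F] (f : F[X][X][X]) :
    ∃ D, ∀ i j, ((f.coeff i).coeff j).natDegree ≤ D := by
  classical
  refine ⟨f.support.sup fun i => (f.coeff i).support.sup fun j =>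
    ((f.coeff i).coeff j).natDegree, fun i j => ?_⟩
  by_cases hi : f.coeff i = 0
  · simp [hi]
  by_cases hj : (f.coeff i).coeff j = 0
  · simp [hj]
  refine le_trans ?_ (Finset.le_sup (f := fun i => (f.coeff i).support.sup fun j =>
    ((f.coeff i).coeff j).natDegree) (mem_support_iff.2 hi))
  exact Finset.le_sup (f := fun j => ((f.coeff i).coeff j).natDegree) (mem_support_iff.2 hj)

theorem noRoot_poly (F : Type) [Field F] [CharZero F] (hF : NoRootProp F) (f : F[X][X][X])
    (hf : f.Monic) (hroot : ∀ p, ¬ f.IsRoot p) :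
    {a : F | ∀ b, ¬ (f.map (evalRingHom (C a))).IsRoot b}.Infinite := by
  classical
  obtain ⟨D, hD⟩ := exists_degree_bound f
  let Ω := AlgebraicClosure (RatFunc F)
  let IC := integralClosure F[X] Ω
  have hfs : FaithfulSMul F[X] Ω := by
    rw [faithfulSMul_iff_algebraMap_injective, IsScalarTower.algebraMap_eq F[X] (RatFunc F) Ω]
    exact (algebraMap (RatFunc F) Ω).injective.comp (IsFractionRing.injective F[X] (RatFunc F))
  have hinj : Function.Injective (algebraMap F[X] IC) := FaithfulSMul.algebraMap_injective _ _
  let v : Fin (D + 1) → F := fun j => (j : ℕ)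
  have hv : Function.Injective v := fun i j h => Fin.ext (Nat.cast_injective h)
  let fj : Fin (D + 1) → F[X][X] := fun j => f.map (mapRingHom (evalRingHom (v j)))
  have hfj : ∀ j, (fj j).Monic := fun j => hf.map _
  let R : Fin (D + 1) → Finset IC := fun j => ((fj j).map (algebraMap F[X] IC)).roots.toFinset
  let bs : Fin (D + 1) → F[X] := fun j => Lagrange.basis Finset.univ v j
  let c : (Fin (D + 1) → IC) → ℕ → IC := fun ℓ i =>
    ∑ j, algebraMap F[X] IC (C ((bs j).coeff i)) * ℓ j
  let Z : Finset IC := (Fintype.piFinset R).biUnion fun ℓ => (Finset.range (D + 1)).image (c ℓ)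
  let x : (Fin (D + 1) → IC) → F[X][X] := fun ℓ =>
    ∑ i ∈ Finset.range (D + 1), ((Function.invFun (algebraMap F[X] IC) (c ℓ i)).map C) * C (X ^ i)
  let bad : Set F := ⋃ ℓ ∈ Fintype.piFinset R, {a | (f.eval (x ℓ)).IsRoot (C a)}
  have hbad : bad.Finite := by
    refine Set.Finite.biUnion (Finset.finite_toSet _) fun ℓ _ => ?_
    exact (finite_setOfPred_isRoot (hroot (x ℓ))).preimage (C_injective.injOn)
  refine ((noRoot_places (Ω := Ω) hF Z).sdiff hbad).mono ?_
  rintro a ⟨ha, hab⟩ b hb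
  obtain ⟨L, _, π, hπ⟩ := exists_place F Ω a
  let ε : F →+* L := (π.comp (algebraMap F[X] IC)).comp C
  have hε : Function.Injective ε := ε.injective
  have hbD : b.natDegree ≤ D := by
    refine natDegree_root_le _ (hf.map _) D (fun i => ?_) b hb
    rw [Polynomial.coeff_map, coe_evalRingHom, eval_eq_sum_range]
    apply natDegree_sum_le_of_forall_le
    intro j _
    rw [← C_pow]
    exact (natDegree_mul_C_le _ _).trans (hD i j)
  have hcomp : ∀ j, (evalRingHom (v j)).comp (evalRingHom (C a)) =
      (evalRingHom a).comp (mapRingHom (evalRingHom (v j))) := by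
    intro j
    ext <;> simp
  have hex : ∀ j, ∃ z : IC, ((fj j).map (algebraMap F[X] IC)).IsRoot z ∧ π z = ε (b.eval (v j)) := by
    intro j
    refine root_lift IC.toSubring π ((fj j).map (algebraMap F[X] IC)) ((hfj j).map _)
      (ic_root_mem (fj j) (hfj j)) _ ?_
    have h1 := map_place π hπ (fj j)
    rw [h1]
    apply IsRoot.map
    change (((f.map (mapRingHom (evalRingHom (v j)))).map (evalRingHom a))).IsRoot _
    rw [Polynomial.map_map, ← hcomp, ← Polynomial.map_map]
    exact hb.map (f := evalRingHom (v j))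
  choose ℓ hℓ hℓπ using hex
  have hℓR : ℓ ∈ Fintype.piFinset R := by
    rw [Fintype.mem_piFinset]
    intro j
    rw [Multiset.mem_toFinset, mem_roots ((hfj j).map _).ne_zero]
    exact hℓ j
  have hbint : b = ∑ j, C (b.eval (v j)) * bs j := by
    conv_lhs => rw [Lagrange.eq_interpolate (s := Finset.univ) (v := v) (f := b) hv.injOn (by
      refine lt_of_le_of_lt degree_le_natDegree ?_
      rw [Finset.card_univ, Fintype.card_fin]
      exact_mod_cast Nat.lt_succ_of_le hbD)]
    rw [Lagrange.interpolate_apply]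
  have hπc : ∀ i, π (c ℓ i) = ε (b.coeff i) := by
    intro i
    conv_rhs => rw [hbint]
    simp only [c, map_sum, map_mul, hℓπ, finsetSum_coeff, coeff_C_mul]
    refine Finset.sum_congr rfl fun j _ => mul_comm _ _
  have hrange : ∀ i ∈ Finset.range (D + 1), c ℓ i ∈ Set.range (algebraMap F[X] IC) := by
    intro i hi
    by_contra hni
    exact ha L π hπ (c ℓ i) (Finset.mem_biUnion.2 ⟨ℓ, hℓR, Finset.mem_image_of_mem _ hi⟩) hni
      (b.coeff i) (hπc i)
  apply hab
  refine Set.mem_biUnion hℓR ?_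
  change (f.eval (x ℓ)).eval (C a) = 0
  have hxb : (x ℓ).eval (C a) = b := by
    simp only [x, eval_finsetSum, eval_mul, eval_C]
    conv_rhs => rw [b.as_sum_range_C_mul_X_pow' (Nat.lt_succ_of_le hbD)]
    refine Finset.sum_congr rfl fun i hi => ?_
    congr 1
    have h1 := Function.invFun_eq (hrange i hi)
    set q := Function.invFun (algebraMap F[X] IC) (c ℓ i)
    have h2 : ε (q.eval a) = ε (b.coeff i) := by
      rw [← hπc, ← h1, place_eval π hπ]; rfl
    rw [← hε h2, Polynomial.eval_map]
    exact Polynomial.eval₂_at_apply C a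
  have := Polynomial.eval_map_apply (f := evalRingHom (C a)) (p := f) (x := x ℓ)
  simp only [coe_evalRingHom] at this
  rw [← this, hxb]
  exact hb

theorem noRoot_ratFunc (F : Type) [Field F] [CharZero F] (hF : NoRootProp F) :
    NoRootProp (RatFunc F) := by
  classical
  intro f hf hroot
  let E := RatFunc F
  let S := F[X]
  let al : S →+* E := algebraMap S E
  have hal : Function.Injective al := IsFractionRing.injective S E
  obtain ⟨⟨c, hc⟩, hcint⟩ := IsLocalization.exist_integer_multiples_of_finset (nonZeroDivisors S)
    (f.coeffs.biUnion fun p => p.coeffs : Finset E)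
  have hc0 : al c ≠ 0 := by
    rw [Ne, map_eq_zero_iff _ hal]; exact nonZeroDivisors.ne_zero hc
  have hcC : (C (al c) : E[X]) ≠ 0 := C_ne_zero.2 hc0
  have hint : ∀ i, f.coeff i * C (al c) ∈ (mapRingHom al).range := by
    intro i
    rw [RingHom.mem_range]
    have : f.coeff i * C (al c) ∈ lifts al := by
      rw [lifts_iff_coeff_lifts]
      intro j
      rw [coeff_mul_C]
      by_cases hj : (f.coeff i).coeff j = 0
      · exact ⟨0, by simp [hj]⟩
      have hi : f.coeff i ≠ 0 := fun h => hj (by simp [h])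
      obtain ⟨r, hr⟩ := hcint _ (Finset.mem_biUnion.2
        ⟨f.coeff i, coeff_mem_coeffs hi, coeff_mem_coeffs hj⟩)
      refine ⟨r, ?_⟩
      rw [mul_comm]
      change al r = _ at hr
      rw [hr]
      exact Algebra.smul_def _ _
    exact this
  have hmal : Function.Injective (mapRingHom al) := Polynomial.map_injective al hal
  obtain ⟨f1, hf1⟩ : ∃ f1 : S[X][X], f1.map (mapRingHom al) = scaleRoots f (C (al c)) := by
    have : scaleRoots f (C (al c)) ∈ lifts (mapRingHom al) := by
      rw [lifts_iff_coeff_lifts]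
      intro i
      change _ ∈ (mapRingHom al).range
      rw [coeff_scaleRoots]
      rcases lt_trichotomy i f.natDegree with h | h | h
      · obtain ⟨m, hm⟩ : ∃ m, f.natDegree - i = m + 1 := ⟨f.natDegree - i - 1, by omega⟩
        rw [hm, pow_succ', ← mul_assoc]
        exact Subring.mul_mem _ (hint i) (Subring.pow_mem _ (RingHom.mem_range.2 ⟨C c, by simp⟩) _)
      · rw [h, hf.coeff_natDegree, Nat.sub_self, pow_zero, mul_one]
        exact Subring.one_mem _
      · rw [coeff_eq_zero_of_natDegree_lt h, zero_mul]
        exact Subring.zero_mem _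
    exact this
  have hf1m : f1.Monic := monic_of_injective hmal (by
    rw [hf1, monic_scaleRoots_iff]; exact hf)
  have hf1r : ∀ p, ¬ f1.IsRoot p := by
    intro p hp
    have h1 : (scaleRoots f (C (al c))).IsRoot (mapRingHom al p) := by
      rw [← hf1]; exact hp.map
    apply hroot (C (al c)⁻¹ * mapRingHom al p)
    have h2 := scaleRoots_eval_mul f (C (al c)⁻¹ * mapRingHom al p) (C (al c))
    rw [← mul_assoc, ← C_mul, mul_inv_cancel₀ hc0, C_1, one_mul, h1] at h2
    exact (mul_eq_zero.1 h2.symm).resolve_left (pow_ne_zero _ hcC)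
  have key := noRoot_poly F hF f1 hf1m hf1r
  have hinj : Function.Injective (al.comp C) := hal.comp C_injective
  refine (key.image hinj.injOn).mono ?_
  rintro _ ⟨a, ha, rfl⟩ b hb
  let a' : E := al (C a)
  change (f.map (evalRingHom a')).IsRoot b at hb
  have hcomp : (evalRingHom a').comp (mapRingHom al) = al.comp (evalRingHom (C a)) := by
    ext <;> simp [a']
  have h1 : ((f1.map (evalRingHom (C a))).map al).IsRoot (al c * b) := by
    rw [Polynomial.map_map, ← hcomp, ← Polynomial.map_map, hf1, map_scaleRoots _ _ _ (by
      rw [hf.leadingCoeff, map_one]; exact one_ne_zero), IsRoot]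
    have : evalRingHom a' (C (al c)) = al c := by simp
    rw [this, scaleRoots_eval_mul, hb, mul_zero]
  obtain ⟨p, hp⟩ := IsIntegrallyClosed.isIntegral_iff.1 (show IsIntegral S (al c * b) from
    ⟨f1.map (evalRingHom (C a)), hf1m.map _, by rw [← Polynomial.eval_map]; exact h1⟩)
  rw [← hp] at h1
  exact ha p (h1.of_map hal)

theorem irr_ratFunc (F : Type) [Field F] [CharZero F] (hF : IrrProp F) : IrrProp (RatFunc F) := by
  have : CharZero (RatFunc F) := charZero_of_injective_algebraMap (R := F[X])
    (IsFractionRing.injective F[X] (RatFunc F))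
  exact irr_of_noRoot _ (noRoot_ratFunc F (noRoot_of_irr F hF))

theorem qf_obstruct (A B Ω : Type) [CommRing A] [CommRing B] [Algebra A B] [Field Ω]
    [IsAlgClosed Ω] [Algebra.FiniteType A B] [Algebra.QuasiFinite A B]
    (K : Subfield Ω) (φ : A →+* Ω) (hφK : ∀ a, φ a ∈ K)
    (hno : ∀ χ : B →+* Ω, (∀ a, χ (algebraMap A B a) = φ a) → ∃ b, χ b ∉ K) :
    ∃ Z : Finset Ω, ∀ (C' : Subring Ω) (M : Type) [Field M] (π : C' →+* M) (φ' : A →+* C'),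
      (∀ a, (φ' a : Ω) = φ a) → (∀ z ∈ Z, z ∈ C') →
      (∀ z : C', (z : Ω) ∈ Z → (z : Ω) ∉ K → ∀ c : C', (c : Ω) ∈ K → π z ≠ π c) →
      (∀ z : C', (z : Ω) ∈ Z → (z : Ω) ≠ 0 → π z ≠ 0) →
      ∀ ψ : B →+* M, (∀ a, ψ (algebraMap A B a) = π (φ' a)) →
      ∃ b, ∀ c : C', (c : Ω) ∈ K → ψ b ≠ π c := by
  classical
  obtain ⟨n, ρ, hρ⟩ := Algebra.FiniteType.iff_quotient_mvPolynomial''.1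
    (inferInstance : Algebra.FiniteType A B)
  let x : Fin n → B := fun j => ρ (MvPolynomial.X j)
  have hρx : ∀ p, ρ p = MvPolynomial.eval₂ (algebraMap A B) x p := by
    intro p
    have : ρ = MvPolynomial.aeval x := by ext j; simp [x]
    rw [this]; rfl
  -- monic equations over Ω
  have hq : ∀ j, ∃ q : Polynomial Ω, q.Monic ∧ q.eval₂ MvPolynomial.C (MvPolynomial.X j) ∈
      (RingHom.ker ρ).map (MvPolynomial.map (σ := Fin n) φ) := by
    intro j
    let _ : Algebra A Ω := φ.toAlgebra
    have hfin : Module.Finite Ω (TensorProduct A Ω B) := Module.Finite.of_quasiFinite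
    obtain ⟨q, hqm, hq⟩ := Algebra.IsIntegral.isIntegral (R := Ω)
      (TensorProduct.tmul A (1 : Ω) (x j))
    refine ⟨q, hqm, ?_⟩
    let I := (RingHom.ker ρ).map (MvPolynomial.map (σ := Fin n) φ)
    let Q := MvPolynomial (Fin n) Ω ⧸ I
    let β₀ : MvPolynomial (Fin n) A →+* Q := (Ideal.Quotient.mk I).comp (MvPolynomial.map φ)
    have hker : RingHom.ker (ρ : MvPolynomial (Fin n) A →+* B) ≤ RingHom.ker β₀ := by
      intro p hp
      exact Ideal.Quotient.eq_zero_iff_mem.2 (Ideal.mem_map_of_mem _ hp)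
    let β : B →+* Q := RingHom.liftOfSurjective (ρ : MvPolynomial (Fin n) A →+* B) hρ ⟨β₀, hker⟩
    have hβ : ∀ p, β (ρ p) = β₀ p := fun p =>
      RingHom.liftOfRightInverse_comp_apply _ _ _ ⟨β₀, hker⟩ p
    let βa : B →ₐ[A] Q := { β with
      commutes' := by
        intro a
        have := hβ (MvPolynomial.C a)
        rw [MvPolynomial.algHom_C] at this
        refine this.trans ?_
        simp [β₀]
        rfl }
    let T : TensorProduct A Ω B →ₐ[Ω] Q := Algebra.TensorProduct.lift (Algebra.ofId Ω Q) βa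
      (fun _ _ => Commute.all _ _)
    have hT : T (TensorProduct.tmul A (1 : Ω) (x j)) = Ideal.Quotient.mk I (MvPolynomial.X j) := by
      rw [Algebra.TensorProduct.lift_tmul, map_one, one_mul]
      refine (hβ (MvPolynomial.X j)).trans ?_
      simp [β₀]
    have h1 := congrArg T hq
    rw [map_zero] at h1
    apply Ideal.Quotient.eq_zero_iff_mem.1
    rw [← h1, hom_eval₂]
    change _ = T (aeval _ q)
    rw [← Polynomial.aeval_algHom_apply, hT]
    rfl
  choose q hqm hqI using hq
  have hrel : ∀ j, ∃ (m : ℕ) (u : Fin m → MvPolynomial (Fin n) Ω) (r : Fin m → MvPolynomial (Fin n) A),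
      (∀ i, ρ (r i) = 0) ∧ ∑ i, u i * MvPolynomial.map φ (r i) =
        (q j).eval₂ MvPolynomial.C (MvPolynomial.X j) := by
    intro j
    obtain ⟨m, u, g, hg⟩ := Submodule.mem_span_set'.1 (hqI j)
    choose r hr hrg using fun i => (g i).2
    refine ⟨m, u, r, hr, ?_⟩
    rw [← hg]
    refine Finset.sum_congr rfl fun i _ => ?_
    rw [smul_eq_mul, ← hrg i]
  choose m u r hr hur using hrel
  let R : Fin n → Finset Ω := fun j => (q j).roots.toFinset
  let w : (Fin n → Ω) → Ω := fun ℓ =>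
    if h : ∃ p, ρ p = 0 ∧ MvPolynomial.eval₂ φ ℓ p ≠ 0 then MvPolynomial.eval₂ φ ℓ h.choose else 0
  let Z : Finset Ω := (Finset.univ.biUnion R) ∪ (Finset.univ.biUnion fun j => (q j).coeffs) ∪
    (Finset.univ.biUnion fun j => Finset.univ.biUnion fun i => (u j i).support.image fun d =>
      (u j i).coeff d) ∪ (Fintype.piFinset R).image w
  have hZ1 : ∀ j, ∀ z ∈ R j, z ∈ Z := by
    intro j z hz
    simp only [Z, Finset.mem_union, Finset.mem_biUnion]
    exact Or.inl (Or.inl (Or.inl ⟨j, Finset.mem_univ _, hz⟩))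
  have hZ2 : ∀ j, ∀ z ∈ (q j).coeffs, z ∈ Z := by
    intro j z hz
    simp only [Z, Finset.mem_union, Finset.mem_biUnion]
    exact Or.inl (Or.inl (Or.inr ⟨j, Finset.mem_univ _, hz⟩))
  have hZ3 : ∀ j i d, (u j i).coeff d ≠ 0 → (u j i).coeff d ∈ Z := by
    intro j i d hz
    simp only [Z, Finset.mem_union, Finset.mem_biUnion, Finset.mem_image]
    exact Or.inl (Or.inr ⟨j, Finset.mem_univ _, i, Finset.mem_univ _, d,
      MvPolynomial.mem_support_iff.2 hz, rfl⟩)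
  have hZ4 : ∀ ℓ ∈ Fintype.piFinset R, w ℓ ∈ Z := by
    intro ℓ hℓ
    simp only [Z, Finset.mem_union]
    exact Or.inr (Finset.mem_image_of_mem _ hℓ)
  refine ⟨Z, ?_⟩
  intro C' M _ π φ' hφ' hZC hZK hZ0 ψ hψ
  have hφ'c : C'.subtype.comp φ' = φ := RingHom.ext hφ'
  have hψc : π.comp φ' = ψ.comp (algebraMap A B) := (RingHom.ext hψ).symm
  have hker : ∀ p, ρ p = 0 → MvPolynomial.eval₂ (π.comp φ') (fun j => ψ (x j)) p = 0 := by
    intro p hp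
    rw [hρx] at hp
    have := congrArg ψ hp
    rw [MvPolynomial.hom_eval₂, map_zero] at this
    rw [hψc]; exact this
  have hroot : ∀ j, ∃ z : C', (z : Ω) ∈ R j ∧ π z = ψ (x j) := by
    intro j
    obtain ⟨q', hq'⟩ : ∃ q' : C'[X], q'.map C'.subtype = q j := by
      have : q j ∈ lifts C'.subtype := by
        rw [lifts_iff_coeff_lifts]
        intro i
        by_cases h0 : (q j).coeff i = 0
        · exact ⟨0, by rw [h0, map_zero]⟩
        · exact ⟨⟨_, hZC _ (hZ2 j _ (coeff_mem_coeffs h0))⟩, rfl⟩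
      exact this
    have hu' : ∀ i, ∃ u' : MvPolynomial (Fin n) C', MvPolynomial.map C'.subtype u' = u j i := by
      intro i
      have : u j i ∈ Set.range (MvPolynomial.map (σ := Fin n) C'.subtype) := by
        rw [MvPolynomial.mem_range_map_iff_coeffs_subset]
        intro z hz
        obtain ⟨d, hd, rfl⟩ := MvPolynomial.mem_coeffs_iff.1 hz
        exact ⟨⟨_, hZC _ (hZ3 j i d (MvPolynomial.mem_support_iff.1 hd))⟩, rfl⟩
      exact this
    choose u' hu' using hu'
    have hq'm : q'.Monic := monic_of_injective C'.subtype_injective (by rw [hq']; exact hqm j)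
    have hrel' : ∑ i, u' i * MvPolynomial.map φ' (r j i) =
        q'.eval₂ MvPolynomial.C (MvPolynomial.X j) := by
      apply MvPolynomial.map_injective C'.subtype C'.subtype_injective
      rw [map_sum, hom_eval₂]
      simp only [map_mul, MvPolynomial.map_map, hφ'c, hu', hur, MvPolynomial.map_X]
      rw [← hq', Polynomial.eval₂_map]
      congr 1
      ext z
      simp
    obtain ⟨z, hz, hz'⟩ := root_lift C' π q' hq'm (by
      intro z hz
      rw [hq'] at hz
      exact hZC _ (hZ1 j z (Multiset.mem_toFinset.2 ((mem_roots (hqm j).ne_zero).2 hz)))) (ψ (x j)) (by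
      have h1 := congrArg (MvPolynomial.eval₂Hom π (fun j => ψ (x j))) hrel'
      rw [hom_eval₂, map_sum] at h1
      rw [IsRoot, Polynomial.eval_map]
      have e1 : (MvPolynomial.eval₂Hom π (fun j => ψ (x j))).comp MvPolynomial.C = π := by
        ext z; simp
      rw [e1] at h1
      have e2 : MvPolynomial.eval₂Hom π (fun j => ψ (x j)) (MvPolynomial.X j) = ψ (x j) := by simp
      rw [e2] at h1
      rw [← h1]
      refine Finset.sum_eq_zero fun i _ => ?_
      rw [map_mul, MvPolynomial.coe_eval₂Hom, MvPolynomial.eval₂_map, hker _ (hr j i), mul_zero])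
    refine ⟨z, ?_, hz'⟩
    rw [Multiset.mem_toFinset, mem_roots (hqm j).ne_zero, ← hq']
    exact hz.map
  choose θ hθR hθπ using hroot
  let ℓ : Fin n → Ω := fun j => θ j
  have hℓ : ℓ ∈ Fintype.piFinset R := Fintype.mem_piFinset.2 hθR
  have hzero : ∀ p, ρ p = 0 → MvPolynomial.eval₂ φ ℓ p = 0 := by
    by_contra! hcon
    have hw : w ℓ = MvPolynomial.eval₂ φ ℓ hcon.choose := dif_pos hcon
    obtain ⟨h1, h2⟩ := hcon.choose_spec
    set p := hcon.choose
    let wc : C' := MvPolynomial.eval₂ φ' θ p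
    have hwc : (wc : Ω) = w ℓ := by
      rw [hw]
      have := MvPolynomial.hom_eval₂ p φ' C'.subtype θ
      rw [hφ'c] at this
      exact this
    apply hZ0 wc (by rw [hwc]; exact hZ4 ℓ hℓ) (by rw [hwc, hw]; exact h2)
    have := MvPolynomial.hom_eval₂ p φ' π θ
    refine this.trans ?_
    rw [← hker p h1]
    congr 1
    funext j
    exact hθπ j
  let χ₀ : MvPolynomial (Fin n) A →+* Ω := MvPolynomial.eval₂Hom φ ℓ
  have hker2 : RingHom.ker (ρ : MvPolynomial (Fin n) A →+* B) ≤ RingHom.ker χ₀ := fun p hp =>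
    hzero p hp
  let χ : B →+* Ω := RingHom.liftOfSurjective (ρ : MvPolynomial (Fin n) A →+* B) hρ ⟨χ₀, hker2⟩
  have hχ : ∀ p, χ (ρ p) = χ₀ p := fun p =>
      RingHom.liftOfRightInverse_comp_apply _ _ _ ⟨χ₀, hker2⟩ p
  by_contra! hcon
  have hθK : ∀ j, (θ j : Ω) ∈ K := by
    intro j
    by_contra hj
    obtain ⟨c, hc, hc'⟩ := hcon (x j)
    exact hZK (θ j) (hZ1 j _ (hθR j)) hj c hc ((hθπ j).trans hc')
  obtain ⟨b, hb⟩ := hno χ (by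
    intro a
    have := hχ (MvPolynomial.C a)
    rw [MvPolynomial.algHom_C] at this
    refine this.trans ?_
    simp [χ₀])
  apply hb
  obtain ⟨p, rfl⟩ := hρ b
  rw [hχ]
  change MvPolynomial.eval₂ φ ℓ p ∈ K
  rw [MvPolynomial.eval₂_eq]
  exact Subfield.sum_mem _ fun d _ => Subfield.mul_mem _ (hφK _)
    (Subfield.prod_mem _ fun i _ => Subfield.pow_mem _ (hθK i) _)

theorem spec_step (k F : Type) [Field k] [Field F] [CharZero F] (hF : IrrProp F) (κ : k →+* F)
    (L : Type) [Field L] [Algebra (RatFunc F) L] [FiniteDimensional (RatFunc F) L]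
    (A : Type) [CommRing A] (κA : k →+* A) (hA : κA.FiniteType) (φ : A →+* L)
    (hφ : ∀ x, φ (κA x) = algebraMap (RatFunc F) L (algebraMap F[X] (RatFunc F) (C (κ x))))
    (ι : Type) [Fintype ι] (B : ι → Type) [∀ i, CommRing (B i)] (γ : ∀ i, A →+* B i)
    (hγ : ∀ i, (γ i).FiniteType) (hγ' : ∀ i, (γ i).QuasiFinite)
    (hno : ∀ i (χ : B i →+* L), χ.comp (γ i) ≠ φ) :
    ∃ (h : Type) (_ : Field h) (_ : Algebra F h) (_ : FiniteDimensional F h) (φh : A →+* h),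
      (∀ x, φh (κA x) = algebraMap F h (κ x)) ∧ ∀ i (ψ : B i →+* h), ψ.comp (γ i) ≠ φh := by
  classical
  let E := RatFunc F
  let Ω := AlgebraicClosure L
  have hEΩ : Algebra.IsAlgebraic E Ω := Algebra.IsAlgebraic.trans E L Ω
  let K : IntermediateField E Ω := (IsScalarTower.toAlgHom E L Ω).fieldRange
  have hfin : FiniteDimensional E K :=
    Module.Finite.equiv (AlgEquiv.ofInjectiveField (IsScalarTower.toAlgHom E L Ω)).toLinearEquiv
  let φΩ : A →+* Ω := (algebraMap L Ω).comp φ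
  have hK : ∀ z : Ω, z ∈ K.toSubfield ↔ ∃ l : L, algebraMap L Ω l = z := fun z => Iff.rfl
  have hobs : ∀ i, ∃ Z : Finset Ω, ∀ (C' : Subring Ω) (M : Type) [Field M] (π : C' →+* M)
      (φ' : A →+* C'),
      (∀ a, (φ' a : Ω) = φΩ a) → (∀ z ∈ Z, z ∈ C') →
      (∀ z : C', (z : Ω) ∈ Z → (z : Ω) ∉ K.toSubfield →
        ∀ c : C', (c : Ω) ∈ K.toSubfield → π z ≠ π c) →
      (∀ z : C', (z : Ω) ∈ Z → (z : Ω) ≠ 0 → π z ≠ 0) →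
      ∀ ψ : B i →+* M, (∀ a, ψ (γ i a) = π (φ' a)) →
      ∃ b, ∀ c : C', (c : Ω) ∈ K.toSubfield → ψ b ≠ π c := by
    intro i
    let _ : Algebra A (B i) := (γ i).toAlgebra
    have h1 : Algebra.FiniteType A (B i) := hγ i
    have h2 : Algebra.QuasiFinite A (B i) := hγ' i
    refine qf_obstruct A (B i) Ω K.toSubfield φΩ (fun a => (hK _).2 ⟨φ a, rfl⟩) ?_
    intro χ hχ
    by_contra! hcon
    have hcon' : ∀ b, ∃ l : L, algebraMap L Ω l = χ b := fun b => (hK _).1 (hcon b)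
    have hinj : Function.Injective (algebraMap L Ω) := (algebraMap L Ω).injective
    choose g hg using hcon'
    let χ' : B i →+* L :=
      { toFun := g
        map_one' := hinj (by rw [hg, map_one, map_one])
        map_mul' := fun a b => hinj (by simp only [hg, map_mul])
        map_zero' := hinj (by rw [hg, map_zero, map_zero])
        map_add' := fun a b => hinj (by simp only [hg, map_add]) }
    apply hno i χ'
    ext a
    apply hinj
    exact (hg _).trans (hχ a)
  choose Z hZ using hobs
  obtain ⟨S, hS⟩ : ∃ S : Finset A, ∀ R : Subring A, (∀ x, κA x ∈ R) → (∀ s ∈ S, s ∈ R) → ∀ a, a ∈ R := by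
    let _ : Algebra k A := κA.toAlgebra
    obtain ⟨S, hS⟩ : (⊤ : Subalgebra k A).FG := (hA : Algebra.FiniteType k A).out
    refine ⟨S, fun R h1 h2 a => ?_⟩
    have h3 : Algebra.adjoin k (S : Set A) ≤ ({ R with algebraMap_mem' := h1 } : Subalgebra k A) :=
      Algebra.adjoin_le h2
    rw [hS] at h3
    exact h3 (Algebra.mem_top (x := a))
  let ZZ : Finset Ω := (Finset.univ.biUnion Z) ∪ S.image φΩ
  obtain ⟨a, C', M, _, _, _, π, h1, h2, h3, h4⟩ := (sp_alg F hF E Ω K ZZ).nonempty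
  have hZZ : ∀ i, ∀ z ∈ Z i, z ∈ ZZ := fun i z hz =>
    Finset.mem_union_left _ (Finset.mem_biUnion.2 ⟨i, Finset.mem_univ _, hz⟩)
  have hφκ : ∀ x, φΩ (κA x) = algebraMap E Ω (algebraMap F[X] E (C (κ x))) := by
    intro x
    change algebraMap L Ω (φ (κA x)) = _
    rw [hφ, ← IsScalarTower.algebraMap_apply]
  have hAC : ∀ b : A, φΩ b ∈ C' := by
    refine hS (C'.comap φΩ) (fun x => ?_) (fun s hs => ?_)
    · rw [Subring.mem_comap, hφκ]
      exact (h2 _).choose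
    · exact h1 _ (Finset.mem_union_right _ (Finset.mem_image_of_mem _ hs))
  let φ' : A →+* C' := φΩ.codRestrict C' hAC
  let H : Subalgebra F M :=
    { (K.toSubfield.toSubring.comap C'.subtype).map π with
      algebraMap_mem' := by
        intro r
        obtain ⟨hr, hr'⟩ := h2 (C r)
        refine ⟨⟨_, hr⟩, ?_, ?_⟩
        · exact K.algebraMap_mem _
        · rw [hr']; simp }
  have hH : ∀ y, y ∈ H ↔ ∃ c : C', (c : Ω) ∈ K.toSubfield ∧ π c = y := fun y => Iff.rfl
  have hHf : IsField H := Subalgebra.isField_of_algebraic H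
  let h := H.toIntermediateField' hHf
  have hh : ∀ y, y ∈ h ↔ ∃ c : C', (c : Ω) ∈ K.toSubfield ∧ π c = y := fun y => Iff.rfl
  let φh : A →+* h := (π.comp φ').codRestrict h (fun b => (hh _).2
    ⟨φ' b, (hK _).2 ⟨φ b, rfl⟩, rfl⟩)
  refine ⟨h, inferInstance, inferInstance, inferInstance, φh, ?_, ?_⟩
  · intro x
    apply Subtype.ext
    change π (φ' (κA x)) = algebraMap F M (κ x)
    obtain ⟨hr, hr'⟩ := h2 (C (κ x))
    rw [eval_C] at hr'
    rw [← hr']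
    congr 1
    apply Subtype.ext
    exact hφκ x
  · intro i ψ hψ
    obtain ⟨b, hb⟩ := hZ i C' M π φ' (fun _ => rfl) (fun z hz => h1 z (hZZ i z hz))
      (fun z hz => h3 z (hZZ i _ hz)) (fun z hz => h4 z (hZZ i _ hz))
      ((algebraMap h M).comp ψ) (by
        intro a
        have := congrArg (algebraMap h M) (DFunLike.congr_fun hψ a)
        exact this)
    obtain ⟨c, hc, hc'⟩ := (hh _).1 (ψ b).2
    exact hb c hc hc'.symm

theorem factor_affine {X : Scheme.{0}} (L : Type) [Field L] (t : Spec (CommRingCat.of L) ⟶ X)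
    (U : X.Opens) (hU : IsAffineOpen U) (z : Spec (CommRingCat.of L)) (hz : t z ∈ U) :
    ∃ φ : Γ(X, U) →+* L, Spec.map (CommRingCat.ofHom φ) ≫ hU.fromSpec = t := by
  have hr : Set.range t ⊆ Set.range hU.fromSpec := by
    rw [hU.range_fromSpec]
    rintro _ ⟨w, rfl⟩
    have : w = z := by
      have : Subsingleton (PrimeSpectrum L) := inferInstance
      exact this.elim w z
    rw [this]; exact hz
  refine ⟨(Spec.preimage (IsOpenImmersion.lift hU.fromSpec t hr)).hom, ?_⟩
  have h1 : CommRingCat.ofHom (Spec.preimage (IsOpenImmersion.lift hU.fromSpec t hr)).hom =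
    Spec.preimage (IsOpenImmersion.lift hU.fromSpec t hr) := rfl
  rw [h1, Spec.map_preimage]
  exact IsOpenImmersion.lift_fac _ _ _

/-- Every point of `X` over `k` with values in a finite extension of `F` lifts along `f`. -/
def LiftProp {k : Type} [Field k] {X Y : Scheme.{0}} (pX : X ⟶ Spec (CommRingCat.of k)) (f : Y ⟶ X)
    (F : Type) [Field F] (κ : k →+* F) : Prop :=
  ∀ (L : Type) [Field L] [Algebra F L] [FiniteDimensional F L] (t : Spec (CommRingCat.of L) ⟶ X),
    t ≫ pX = Spec.map (CommRingCat.ofHom ((algebraMap F L).comp κ)) → ∃ s, s ≫ f = t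

theorem lift_step {k : Type} [Field k] {X Y : Scheme.{0}} (pX : X ⟶ Spec (CommRingCat.of k))
    (f : Y ⟶ X) [LocallyOfFiniteType pX] [LocallyOfFiniteType f] [QuasiCompact f]
    [LocallyQuasiFinite f] (F : Type) [Field F] [CharZero F] (hF : IrrProp F) (κ : k →+* F)
    (hlift : LiftProp pX f F κ) :
    LiftProp pX f (RatFunc F) (((algebraMap F[X] (RatFunc F)).comp C).comp κ) := by
  classical
  intro L _ _ _ t ht
  by_contra hcon
  let z : Spec (CommRingCat.of L) := (⊥ : PrimeSpectrum L)
  obtain ⟨U, hU, hzU, -⟩ := exists_isAffineOpen_mem_and_subset (X := X) (x := t z) (U := ⊤) trivial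
  obtain ⟨φ, hφ⟩ := factor_affine L t U hU z hzU
  let κA : k →+* Γ(X, U) := (Spec.preimage (hU.fromSpec ≫ pX)).hom
  have hκA : Spec.map (CommRingCat.ofHom κA) = hU.fromSpec ≫ pX := by
    have h1 : CommRingCat.ofHom κA = Spec.preimage (hU.fromSpec ≫ pX) := rfl
    rw [h1, Spec.map_preimage]
  have hκAft : κA.FiniteType := by
    have : LocallyOfFiniteType (Spec.map (CommRingCat.ofHom κA)) := by
      rw [hκA]; infer_instance
    exact (HasRingHomProperty.Spec_iff (P := @LocallyOfFiniteType)).1 this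
  have hcomp : ∀ (M : Type) [Field M] (φ : Γ(X, U) →+* M) (j : k →+* M),
      (Spec.map (CommRingCat.ofHom φ) ≫ hU.fromSpec) ≫ pX = Spec.map (CommRingCat.ofHom j) ↔
      φ.comp κA = j := by
    intro M _ φ j
    rw [Category.assoc, ← hκA, ← Spec.map_comp, ← CommRingCat.ofHom_comp]
    constructor
    · intro h
      exact congrArg CommRingCat.Hom.hom (Spec.map_injective h)
    · intro h; rw [h]
  obtain ⟨S, hS, hSU⟩ := isCompact_iff_finite_and_eq_biUnion_affineOpens.1
    (f.isCompact_preimage hU.isCompact)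
  have hSf : Fintype S := hS.fintype
  have hle : ∀ i : S, (i.1 : Y.Opens) ≤ f ⁻¹ᵁ U := by
    intro i
    rw [hSU]
    exact le_iSup₂_of_le i.1 i.2 le_rfl
  let e := Fintype.equivFin S
  let V : Fin (Fintype.card S) → Y.Opens := fun i => ((e.symm i).1 : Y.Opens)
  have hV : ∀ i, IsAffineOpen (V i) := fun i => (e.symm i).1.2
  have hVU : ∀ i, V i ≤ f ⁻¹ᵁ U := fun i => hle _
  let γ : ∀ i, Γ(X, U) →+* Γ(Y, V i) := fun i => (f.appLE U (V i) (hVU i)).hom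
  have hγ : ∀ i, Spec.map (CommRingCat.ofHom (γ i)) ≫ hU.fromSpec = (hV i).fromSpec ≫ f :=
    fun i => IsAffineOpen.SpecMap_appLE_fromSpec f hU (hV i) (hVU i)
  obtain ⟨h, _, _, _, φh, hφh, hψ⟩ := spec_step k F hF κ L Γ(X, U) κA hκAft φ
    (by
      have := (hcomp L φ _).1 ((congrArg (· ≫ pX) hφ).trans ht)
      intro x
      exact DFunLike.congr_fun this x)
    (Fin (Fintype.card S)) (fun i => Γ(Y, V i)) γ
    (fun i => LocallyOfFiniteType.finiteType_appLE f hU (hV i) (hVU i))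
    (fun i => LocallyQuasiFinite.quasiFinite_appLE hU (hV i) (hVU i))
    (by
      intro i χ hχ
      apply hcon
      refine ⟨Spec.map (CommRingCat.ofHom χ) ≫ (hV i).fromSpec, ?_⟩
      rw [Category.assoc, ← hγ i, ← Category.assoc, ← Spec.map_comp, ← CommRingCat.ofHom_comp,
        hχ, hφ])
  obtain ⟨s, hs⟩ := hlift h (Spec.map (CommRingCat.ofHom φh) ≫ hU.fromSpec)
    ((hcomp h φh _).2 (RingHom.ext hφh))
  let w : Spec (CommRingCat.of h) := (⊥ : PrimeSpectrum h)
  have hw : s w ∈ f ⁻¹ᵁ U := by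
    change f (s w) ∈ U
    rw [← Scheme.Hom.comp_apply, hs, Scheme.Hom.comp_apply]
    have : hU.fromSpec (Spec.map (CommRingCat.ofHom φh) w) ∈ Set.range hU.fromSpec := ⟨_, rfl⟩
    rw [hU.range_fromSpec] at this
    exact this
  rw [hSU] at hw
  obtain ⟨i, hi⟩ := TopologicalSpace.Opens.mem_iSup.1 hw
  obtain ⟨hiS, hi⟩ := TopologicalSpace.Opens.mem_iSup.1 hi
  let i' := e ⟨i, hiS⟩
  have hi' : s w ∈ V i' := by
    simp only [V, i', Equiv.symm_apply_apply]
    exact hi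
  obtain ⟨ψ, hψ'⟩ := factor_affine h s (V i') (hV i') w hi'
  apply hψ i' ψ
  have h1 : Spec.map (CommRingCat.ofHom (ψ.comp (γ i'))) = Spec.map (CommRingCat.ofHom φh) := by
    rw [← cancel_mono hU.fromSpec, ← hs, ← hψ', Category.assoc, ← hγ i', ← Category.assoc,
      ← Spec.map_comp, ← CommRingCat.ofHom_comp]
  exact congrArg CommRingCat.Hom.hom (Spec.map_injective h1)

theorem tower_exists {k : Type} [Field k] [CharZero k] (hk : IrrProp k) {X Y : Scheme.{0}}
    (pX : X ⟶ Spec (CommRingCat.of k))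
    (f : Y ⟶ X) [LocallyOfFiniteType pX] [LocallyOfFiniteType f] [QuasiCompact f]
    [LocallyQuasiFinite f] (hlift : LiftProp pX f k (RingHom.id k))
    (K : Type) [Field K] (j : k →+* K) (s : Finset K) :
    ∃ (F : Type) (_ : Field F) (_ : CharZero F) (κ : k →+* F) (g : F →+* K),
      IrrProp F ∧ LiftProp pX f F κ ∧ g.comp κ = j ∧ ∀ x ∈ s, g.IsIntegralElem x := by
  classical
  induction s using Finset.induction_on with
  | empty => exact ⟨k, inferInstance, inferInstance, RingHom.id k, j, hk, hlift, RingHom.comp_id j,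
      by simp⟩
  | insert x s hxs ih =>
    obtain ⟨F, _, _, κ, g, hF, hl, hg, hs⟩ := ih
    by_cases hx : g.IsIntegralElem x
    · refine ⟨F, inferInstance, inferInstance, κ, g, hF, hl, hg, ?_⟩
      intro y hy
      rcases Finset.mem_insert.1 hy with rfl | hy
      · exact hx
      · exact hs y hy
    have hinj : Function.Injective (eval₂RingHom g x) := by
      rw [injective_iff_map_eq_zero]
      intro p hp
      by_contra hp0
      apply hx
      refine ⟨p * C p.leadingCoeff⁻¹, monic_mul_leadingCoeff_inv hp0, ?_⟩
      rw [eval₂_mul]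
      change eval₂ g x p = 0 at hp
      rw [hp, zero_mul]
    let g' : RatFunc F →+* K := IsFractionRing.lift (A := F[X]) hinj
    have hg' : ∀ p, g' (algebraMap F[X] (RatFunc F) p) = eval₂ g x p := fun p =>
      IsFractionRing.lift_algebraMap hinj p
    have hch : CharZero (RatFunc F) := charZero_of_injective_algebraMap (R := F[X])
      (IsFractionRing.injective F[X] (RatFunc F))
    have hg'c : g'.comp ((algebraMap F[X] (RatFunc F)).comp C) = g := by
      ext a
      simp only [RingHom.comp_apply, hg', eval₂_C]
    refine ⟨RatFunc F, inferInstance, hch, ((algebraMap F[X] (RatFunc F)).comp C).comp κ, g',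
      irr_ratFunc F hF, lift_step pX f F hF κ hl, ?_, ?_⟩
    · rw [← RingHom.comp_assoc, hg'c, hg]
    intro y hy
    rcases Finset.mem_insert.1 hy with rfl | hy
    · have h1 : g' (algebraMap F[X] (RatFunc F) Polynomial.X) = y := by rw [hg', eval₂_X]
      exact ⟨Polynomial.X - C (algebraMap F[X] (RatFunc F) Polynomial.X), monic_X_sub_C _, by
        rw [eval₂_sub, eval₂_X, eval₂_C, h1, sub_self]⟩
    · obtain ⟨p, hp, hpy⟩ := hs y hy
      refine ⟨p.map ((algebraMap F[X] (RatFunc F)).comp C), hp.map _, ?_⟩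
      rw [Polynomial.eval₂_map, hg'c, hpy]

/--
Let `k` be a Hilbertian field of characteristic 0 and `f : Y ⟶ X` a
quasi-finite morphism (of finite type with finite fibers) of separated schemes of finite
type over `k`.  If `Y (h) → X (h)` is surjective for every finite field extension `h/k`,
then `Y (K) → X (K)` is surjective for every finitely generated field extension `K/k`.
Here `Z (L)` is the set of morphisms `Spec L ⟶ Z` of schemes over `k`.
-/
theorem stmt_3 (k : Type) [Field k] [CharZero k] (hk : IsHilbertian k)
    (X Y : Scheme) (pX : X ⟶ Spec (CommRingCat.of k)) (pY : Y ⟶ Spec (CommRingCat.of k))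
    (f : Y ⟶ X) (hf : f ≫ pX = pY)
    -- `X` and `Y` are separated and of finite type over `k`:
    (hXsep : IsSeparated pX) (hYsep : IsSeparated pY)
    (hXlft : LocallyOfFiniteType pX) (hXqc : QuasiCompact pX)
    (hYlft : LocallyOfFiniteType pY) (hYqc : QuasiCompact pY)
    -- `f` is quasi-finite, i.e. of finite type with finite fibers:
    (hflft : LocallyOfFiniteType f) (hfqc : QuasiCompact f)
    (hfib : ∀ x : X, (f.base ⁻¹' {x}).Finite)
    -- `Y (h) → X (h)` is surjective for every finite extension `h/k`:
    (hsurj : ∀ (h : Type) [Field h] [Algebra k h] [FiniteDimensional k h]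
      (t : Spec (CommRingCat.of h) ⟶ X), t ≫ pX = specOver k h →
      ∃ s : Spec (CommRingCat.of h) ⟶ Y, s ≫ pY = specOver k h ∧ s ≫ f = t) :
    -- then `Y (K) → X (K)` is surjective for every finitely generated extension `K/k`:
    ∀ (K : Type) [Field K] [Algebra k K],
      (∃ s : Finset K, IntermediateField.adjoin k (s : Set K) = ⊤) →
      ∀ t : Spec (CommRingCat.of K) ⟶ X, t ≫ pX = specOver k K →
        ∃ s : Spec (CommRingCat.of K) ⟶ Y, s ≫ pY = specOver k K ∧ s ≫ f = t := by
  rintro K _ _ ⟨S, hS⟩ t ht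
  have hqf : LocallyQuasiFinite f := LocallyQuasiFinite.of_finite_preimage_singleton f hfib
  have hl : LiftProp pX f k (RingHom.id k) := by
    intro L _ _ _ t ht
    obtain ⟨s, -, hs⟩ := hsurj L t ht
    exact ⟨s, hs⟩
  obtain ⟨F, _, _, κ, g, -, hlift, hg, hint⟩ :=
    tower_exists (irr_of_hilbertian k hk) pX f hl K (algebraMap k K) S
  suffices h : ∃ s, s ≫ f = t by
    obtain ⟨s, hs⟩ := h
    refine ⟨s, ?_, hs⟩
    rw [← hf, ← Category.assoc, hs, ht]
  let _ : Algebra F K := g.toAlgebra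
  have hfd : FiniteDimensional F (IntermediateField.adjoin F (S : Set K)) := by
    have : Finite (S : Set K) := S.finite_toSet
    exact IntermediateField.finiteDimensional_adjoin fun x hx => hint x hx
  have htop : IntermediateField.adjoin F (S : Set K) = ⊤ := by
    let T : IntermediateField k K := (IntermediateField.adjoin F (S : Set K)).toSubfield.toIntermediateField
      (fun x => by
        rw [← hg]
        exact (IntermediateField.adjoin F (S : Set K)).algebraMap_mem (κ x))
    have hT : IntermediateField.adjoin k (S : Set K) ≤ T :=
      IntermediateField.adjoin_le_iff.2 (IntermediateField.subset_adjoin F (S : Set K))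
    rw [eq_top_iff]
    intro x _
    have : x ∈ IntermediateField.adjoin k (S : Set K) := by rw [hS]; trivial
    exact hT this
  have hfdK : FiniteDimensional F K := by
    rw [htop] at hfd
    exact Module.Finite.equiv (IntermediateField.topEquiv (F := F) (E := K)).toLinearEquiv
  apply hlift K t
  rw [ht]
  change Spec.map (CommRingCat.ofHom (algebraMap k K)) = Spec.map (CommRingCat.ofHom (g.comp κ))
  rw [hg]
end

section
/- Let k be a Hilbertian field of characteristic 0, and let f : Y → X be a finite morphism of affine integral schemes of finite type over k, with X and Y having the same dimension (f dominant). Suppose that for every finite field extension h of k, the induced map Y(h) → X(h) on h-valued points is surjective. Then f is birational, i.e. the induced extension of function fields k(X) → k(Y) is an isomorphism. -/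
open Polynomial

namespace HilbAux

lemma irreducible_comp_affine {F : Type*} [Field F] (a b : F) (ha : a ≠ 0) (p : F[X]) :
    Irreducible (p.comp (C a * X + C b)) ↔ Irreducible p := by
  haveI := invertibleOfNonzero ha
  have h := MulEquiv.irreducible_iff (algEquivCMulXAddC a b) (x := p)
  rw [← h]
  simp [algEquivCMulXAddC, algEquivOfCompEqX, comp, aeval_def]

/-- Bezout relation with a nonzero constant. -/
lemma exists_disc {A : Type*} [CommRing A] [IsDomain A] [IsIntegrallyClosed A] [CharZero A]
    (F : A[X]) (hm : F.Monic) (hF : Irreducible F) :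
    ∃ D : A, D ≠ 0 ∧ ∃ u v : A[X], u * F + v * derivative F = C D := by
  let K := FractionRing A
  have h1 : Irreducible (F.map (algebraMap A K)) :=
    (hm.irreducible_iff_irreducible_map_fraction_map).1 hF
  have : CharZero K := charZero_of_injective_algebraMap (IsFractionRing.injective A K)
  have h2 : (F.map (algebraMap A K)).Separable := h1.separable
  obtain ⟨u, v, huv⟩ := h2
  obtain ⟨b, hb, hbu⟩ := IsLocalization.integerNormalization_spec (nonZeroDivisors A) u
  obtain ⟨c, hc, hcv⟩ := IsLocalization.integerNormalization_spec (nonZeroDivisors A) v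
  refine ⟨b * c, mul_ne_zero (nonZeroDivisors.ne_zero hb) (nonZeroDivisors.ne_zero hc),
    C c * IsLocalization.integerNormalization (nonZeroDivisors A) u,
    C b * IsLocalization.integerNormalization (nonZeroDivisors A) v, ?_⟩
  apply map_injective _ (IsFractionRing.injective A K)
  simp only [Polynomial.map_add, Polynomial.map_mul, map_C, hbu, hcv, ← derivative_map]
  rw [← algebraMap_smul K b, ← algebraMap_smul K c, smul_eq_C_mul, smul_eq_C_mul]
  simp only [map_mul]
  linear_combination (C (algebraMap A K b) * C (algebraMap A K c)) * huv

lemma exists_shift {k : Type*} [Field k] [CharZero k] (F : k[X][X]) (hm : F.Monic)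
    (D : k[X]) (hD : D ≠ 0) : ∃ c : k, IsCoprime (F.eval (C c)) D := by
  classical
  let Ω := AlgebraicClosure k
  let Z : Finset Ω := (D.map (algebraMap k Ω)).roots.toFinset
  let bad : Set Ω := ⋃ τ ∈ Z, {x | x ∈ (F.map (eval₂RingHom (algebraMap k Ω) τ)).roots.toFinset}
  have hbad : bad.Finite := by
    apply Set.Finite.biUnion (Finset.finite_toSet Z)
    intro τ _
    exact Finset.finite_toSet _
  have hinf : (Set.range (algebraMap k Ω)).Infinite :=
    Set.infinite_range_of_injective (algebraMap k Ω).injective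
  obtain ⟨x, ⟨c, rfl⟩, hx⟩ := hinf.exists_notMem_finite hbad
  refine ⟨c, ?_⟩
  rw [Polynomial.isCoprime_iff_aeval_ne_zero_of_isAlgClosed k Ω]
  intro τ
  by_contra hcon
  push Not at hcon
  obtain ⟨h1, h2⟩ := hcon
  apply hx
  simp only [bad, Set.mem_iUnion]
  have hmap : (F.map (eval₂RingHom (algebraMap k Ω) τ)).Monic := hm.map _
  refine ⟨τ, ?_, ?_⟩
  · have : D.map (algebraMap k Ω) ≠ 0 := by simpa using hD
    simp [Z, hD, IsRoot, eval_map, ← aeval_def, h2]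
  · simp only [Set.mem_ofPred_eq, Multiset.mem_toFinset, mem_roots hmap.ne_zero, IsRoot, eval_map]
    have : (algebraMap k Ω c) = (eval₂RingHom (algebraMap k Ω) τ) (C c) := by simp
    rw [this, eval₂_at_apply]
    simpa [aeval_def] using h1

lemma hilbert_monic {k : Type*} [Field k] [CharZero k] (hk : IsHilbertian k)
    (G : k[X][X]) (hm : G.Monic) (hG : Irreducible G) :
    {a : k | Irreducible (G.map (evalRingHom a))}.Infinite := by
  classical
  obtain ⟨D, hD, u, v, huv⟩ := exists_disc G hm hG
  obtain ⟨c, hc⟩ := exists_shift G hm D hD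
  let l : k[X][X] := C D * X + C (C c)
  let F := G.comp l
  have hdeg : 0 < G.natDegree := by
    by_contra h
    have : G.natDegree = 0 := by omega
    rw [hm.natDegree_eq_zero] at this
    exact hG.not_isUnit (this ▸ isUnit_one)
  have hl : l.natDegree = 1 := natDegree_linear hD
  have hFd : F.natDegree = G.natDegree := by rw [natDegree_comp, hl, mul_one]
  have hFl : F.leadingCoeff = D ^ G.natDegree := by
    rw [leadingCoeff_comp (by omega), hm.leadingCoeff, one_mul, leadingCoeff_linear hD]
  have hF0 : F.eval 0 = G.eval (C c) := by simp [F, l, eval_comp]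
  have hcop : IsCoprime (C D) F := by
    have h1 : l - C (C c) ∣ G.comp l - G.comp (C (C c)) := by
      simp only [comp]
      have := Polynomial.sub_dvd_eval_sub l (C (C c)) (G.map C)
      simpa [eval_map] using this
    have h2 : C D ∣ F - C (G.eval (C c)) := by
      refine dvd_trans ?_ (by simpa using h1)
      exact ⟨X, by simp [l]⟩
    obtain ⟨w, hw⟩ := h2
    have h3 : IsCoprime (C D) (C (G.eval (C c))) := (hc.symm.map (C : k[X] →+* k[X][X]))
    have h4 : F = C (G.eval (C c)) + C D * w := by linear_combination hw
    rw [h4]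
    exact h3.add_mul_left_right w
  have hder : derivative F = C D * (derivative G).comp l := by
    simp [F, derivative_comp, l]
  have hsep : F.Separable := by
    have h5 : u.comp l * F + v.comp l * (derivative G).comp l = C D := by
      have := congrArg (fun p => p.comp l) huv
      simpa using this
    obtain ⟨x, y, hxy⟩ := (hcop.pow_left (m := 2))
    refine ⟨x * C D * u.comp l + y, x * v.comp l, ?_⟩
    rw [hder]
    linear_combination hxy + x * C D * h5
  have hprim : F.IsPrimitive := by
    intro r hr
    have h6 : r ∣ D ^ G.natDegree := by
      rw [← hFl]; exact (C_dvd_iff_dvd_coeff _ _).1 hr _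
    have h7 : r ∣ G.eval (C c) := by
      rw [← hF0, ← coeff_zero_eq_eval_zero]; exact (C_dvd_iff_dvd_coeff _ _).1 hr _
    exact (hc.pow_right (n := G.natDegree)).isUnit_of_dvd' h7 h6
  have hirr : Irreducible F := by
    rw [hprim.irreducible_iff_irreducible_map_fraction_map (K := FractionRing k[X])]
    have h8 := (hm.irreducible_iff_irreducible_map_fraction_map (K := FractionRing k[X])).1 hG
    rw [← irreducible_comp_affine (algebraMap k[X] (FractionRing k[X]) D)
      (algebraMap k[X] (FractionRing k[X]) (C c)) (by simpa using hD)] at h8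
    simpa [F, l, Polynomial.map_comp] using h8
  have hinf := hk F hirr hsep (by omega)
  have hfin : {a : k | D.eval a = 0}.Finite := by
    refine (Finset.finite_toSet D.roots.toFinset).subset ?_
    intro a ha
    simpa [hD] using ha
  refine (hinf.sdiff hfin).mono ?_
  rintro a ⟨ha, hDa⟩
  simp only [Set.mem_ofPred_eq] at ha hDa ⊢
  rw [← irreducible_comp_affine (D.eval a) c hDa]
  simpa [F, l, Polynomial.map_comp] using ha


/-- Kronecker substitution. -/
noncomputable def kron (A : Type*) [CommRing A] (n e : ℕ) : MvPolynomial (Fin n) A →+* A[X] :=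
  MvPolynomial.eval₂Hom C (fun i => X ^ (e ^ (i : ℕ)))

noncomputable def digs (n e j : ℕ) : Fin n →₀ ℕ :=
  Finsupp.equivFunOnFinite.symm (fun i => j / e ^ (i : ℕ) % e)

/-- Inverse Kronecker substitution. -/
noncomputable def unkron (A : Type*) [CommRing A] (n e : ℕ) : A[X] →ₗ[A] MvPolynomial (Fin n) A :=
  Polynomial.lsum (fun j => (MvPolynomial.monomial (digs n e j)))

lemma digs_sum (n e : ℕ) (m : Fin n →₀ ℕ) (h : ∀ i, m i < e) :
    digs n e (∑ i, m i * e ^ (i : ℕ)) = m := by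
  ext i
  have := finFunctionFinEquiv.symm_apply_apply (fun i => (⟨m i, h i⟩ : Fin e))
  have h2 := congrArg Fin.val (congrFun this i)
  simp only at h2
  rw [← h2]
  simp [digs, finFunctionFinEquiv]

lemma unkron_monomial {A : Type*} [CommRing A] (n e j : ℕ) (c : A) :
    unkron A n e (monomial j c) = MvPolynomial.monomial (digs n e j) c := by
  simp [unkron, Polynomial.lsum, sum_monomial_index]

lemma kron_monomial {A : Type*} [CommRing A] (n e : ℕ) (m : Fin n →₀ ℕ) (c : A) :
    kron A n e (MvPolynomial.monomial m c) = monomial (∑ i, m i * e ^ (i : ℕ)) c := by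
  rw [kron, MvPolynomial.coe_eval₂Hom, MvPolynomial.eval₂_monomial]
  rw [← C_mul_X_pow_eq_monomial, Finsupp.prod_fintype _ _ (by simp)]
  congr 1
  simp_rw [← pow_mul]
  rw [Finset.prod_pow_eq_pow_sum]
  simp_rw [mul_comm]

lemma unkron_kron {A : Type*} [CommRing A] (n e : ℕ) (P : MvPolynomial (Fin n) A)
    (h : P.totalDegree < e) : unkron A n e (kron A n e P) = P := by
  conv_lhs => rw [P.as_sum]
  conv_rhs => rw [P.as_sum]
  rw [map_sum, map_sum]
  refine Finset.sum_congr rfl fun m hm => ?_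
  rw [kron_monomial, unkron_monomial, digs_sum]
  intro i
  refine lt_of_le_of_lt ?_ h
  refine le_trans ?_ (MvPolynomial.le_totalDegree hm)
  by_cases hi : m i = 0
  · omega
  · exact Finset.single_le_sum (f := fun j => m j) (fun _ _ => Nat.zero_le _)
      (Finsupp.mem_support_iff.2 hi)

lemma kron_map {A B : Type*} [CommRing A] [CommRing B] (f : A →+* B) (n e : ℕ)
    (P : MvPolynomial (Fin n) A) :
    kron B n e (MvPolynomial.map f P) = (kron A n e P).map f := by
  induction P using MvPolynomial.induction_on' with
  | monomial m c => rw [MvPolynomial.map_monomial, kron_monomial, kron_monomial, map_monomial]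
  | add p q hp hq => simp only [map_add, Polynomial.map_add, hp, hq]

lemma unkron_map {A B : Type*} [CommRing A] [CommRing B] (f : A →+* B) (n e : ℕ)
    (p : A[X]) :
    unkron B n e (p.map f) = MvPolynomial.map f (unkron A n e p) := by
  induction p using Polynomial.induction_on' with
  | monomial m c => rw [map_monomial, unkron_monomial, unkron_monomial, MvPolynomial.map_monomial]
  | add p q hp hq => simp only [map_add, Polynomial.map_add, hp, hq]


lemma spec_exists {k L : Type*} [Field k] [Field L] [Algebra k[X] L] [FaithfulSMul k[X] L] (a : k) :
    ∃ (Q : Ideal (integralClosure k[X] L)) (_ : Q.IsMaximal), ∀ f : k[X],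
      Ideal.Quotient.mk Q (algebraMap k[X] (integralClosure k[X] L) f) =
      Ideal.Quotient.mk Q (algebraMap k[X] (integralClosure k[X] L) (C (f.eval a))) := by
  have hmax : (RingHom.ker (evalRingHom a)).IsMaximal :=
    RingHom.ker_isMaximal_of_surjective _ (fun c => ⟨C c, by simp⟩)
  obtain ⟨Q, hQ, hQP⟩ := Ideal.exists_ideal_over_maximal_of_isIntegral
    (S := integralClosure k[X] L) (RingHom.ker (evalRingHom a)) (by
      intro x hx
      have : x = 0 := by
        have h1 : algebraMap k[X] L x = 0 := by
          have h2 := congrArg (algebraMap (integralClosure k[X] L) L) (RingHom.mem_ker.1 hx)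
          rwa [← IsScalarTower.algebraMap_apply, map_zero] at h2
        exact (FaithfulSMul.algebraMap_injective k[X] L) (by rw [h1, map_zero])
      rw [this]; exact zero_mem _)
  refine ⟨Q, hQ, fun f => ?_⟩
  rw [Ideal.Quotient.mk_eq_mk_iff_sub_mem, ← map_sub, ← Ideal.mem_comap, hQP]
  simp

lemma spec_not_const {k K L : Type*} [Field k] [Field K] [Field L] [Algebra k[X] K]
    [IsFractionRing k[X] K] [Algebra K L] [FiniteDimensional K L]
    [Algebra k[X] L] [IsScalarTower k[X] K L] (θ : integralClosure k[X] L)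
    (hθ : IntermediateField.adjoin K {(θ : L)} = ⊤) (x : integralClosure k[X] L)
    (hx : x ∉ Set.range (algebraMap k[X] (integralClosure k[X] L))) :
    ∃ δ : k[X], δ ≠ 0 ∧ ∀ a : k, δ.eval a ≠ 0 →
      Irreducible ((minpoly k[X] θ).map (evalRingHom a)) →
      ∀ (Ω : Type _) [Field Ω] (χ : k →+* Ω) (ψ : integralClosure k[X] L →+* Ω),
      (∀ f : k[X], ψ (algebraMap k[X] (integralClosure k[X] L) f) = χ (f.eval a)) →
      ψ x ∉ Set.range χ := by
  have hfaith : FaithfulSMul k[X] L := by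
    rw [faithfulSMul_iff_algebraMap_injective, IsScalarTower.algebraMap_eq k[X] K L]
    exact (algebraMap K L).injective.comp (IsFractionRing.injective k[X] K)
  have hIntg : IsIntegral k[X] θ := Algebra.IsIntegral.isIntegral θ
  have hmon : (minpoly k[X] θ).Monic := minpoly.monic hIntg
  obtain ⟨p, hp⟩ : ∃ p : K[X], aeval (θ : L) p = x := by
    have h1 : (x : L) ∈ (IntermediateField.adjoin K {(θ : L)}).toSubalgebra := by
      rw [hθ]; trivial
    rw [IntermediateField.adjoin_simple_toSubalgebra_of_isAlgebraic
      (Algebra.IsAlgebraic.isAlgebraic _)] at h1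
    rw [Algebra.adjoin_singleton_eq_range_aeval] at h1
    exact h1
  obtain ⟨D, hD, hDp⟩ := IsLocalization.integerNormalization_spec (nonZeroDivisors k[X]) p
  have hD0 : D ≠ 0 := nonZeroDivisors.ne_zero hD
  set u0 := IsLocalization.integerNormalization (nonZeroDivisors k[X]) p
  let u := u0 %ₘ minpoly k[X] θ
  have hu0 : aeval (θ : L) u0 = algebraMap k[X] L D * x := by
    rw [← aeval_map_algebraMap K, hDp, ← algebraMap_smul K D, map_smul, hp, algebraMap_smul,
      Algebra.smul_def]
  have hinj : Function.Injective (algebraMap (integralClosure k[X] L) L) := Subtype.val_injective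
  have hu1 : aeval θ u0 = algebraMap k[X] _ D * x := by
    apply hinj
    rw [← aeval_algebraMap_apply, map_mul, ← IsScalarTower.algebraMap_apply]
    exact hu0
  have hu : aeval θ u = algebraMap k[X] _ D * x := by
    rw [← hu1]
    conv_rhs => rw [← modByMonic_add_div u0 (minpoly k[X] θ)]
    simp [u]
  have hudeg : u.degree < (minpoly k[X] θ).degree := degree_modByMonic_lt _ hmon
  obtain ⟨s, hs, hus⟩ : ∃ s, s ≠ 0 ∧ u.coeff s ≠ 0 := by
    by_contra hcon
    push Not at hcon
    have huC : u = C (u.coeff 0) := by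
      ext1 j
      rcases eq_or_ne j 0 with rfl | hj
      · simp
      · rw [hcon j hj, coeff_C, if_neg hj]
    have hxK : (x : L) = algebraMap K L
        (algebraMap k[X] K (u.coeff 0) / algebraMap k[X] K D) := by
      have hD' : algebraMap k[X] L D ≠ 0 := by
        simpa using hD0
      rw [map_div₀, ← IsScalarTower.algebraMap_apply, ← IsScalarTower.algebraMap_apply,
        eq_div_iff hD']
      have h3 := congrArg (algebraMap (integralClosure k[X] L) L) hu
      rw [huC, aeval_C, ← IsScalarTower.algebraMap_apply, map_mul,
        ← IsScalarTower.algebraMap_apply] at h3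
      rw [h3, mul_comm]; rfl
    have hxint : IsIntegral k[X] (algebraMap k[X] K (u.coeff 0) / algebraMap k[X] K D) := by
      rw [← isIntegral_algebraMap_iff (algebraMap K L).injective, ← hxK]
      exact x.2
    obtain ⟨y, hy⟩ := IsIntegrallyClosed.isIntegral_iff.1 hxint
    apply hx
    refine ⟨y, hinj ?_⟩
    rw [← IsScalarTower.algebraMap_apply, IsScalarTower.algebraMap_apply k[X] K L, hy, ← hxK]
    rfl
  refine ⟨D * u.coeff s, mul_ne_zero hD0 hus, ?_⟩
  intro a ha hirr Ω _ χ ψ hψ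
  rintro ⟨r, hr⟩
  have hev : ∀ g : k[X][X], ψ (aeval θ g) = eval₂ χ (ψ θ) (g.map (evalRingHom a)) := by
    intro g
    rw [aeval_def, hom_eval₂, eval₂_map]
    congr 1
    ext f <;> simp [hψ]
  let w := u.map (evalRingHom a) - C (D.eval a * r)
  have hw : eval₂ χ (ψ θ) w = 0 := by
    simp only [w, eval₂_sub, eval₂_C, ← hev, hu]
    rw [map_mul, map_mul, hψ, hr, sub_self]
  have hΘ : eval₂ χ (ψ θ) ((minpoly k[X] θ).map (evalRingHom a)) = 0 := by
    rw [← hev, minpoly.aeval, map_zero]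
  rw [eval_mul] at ha
  have hw0 : w ≠ 0 := by
    intro h0
    have := congrArg (fun p => coeff p s) h0
    simp only [w, coeff_sub, coeff_map, coeff_C, if_neg hs, sub_zero, coeff_zero,
      coe_evalRingHom] at this
    exact (right_ne_zero_of_mul ha) this
  have hwdeg : w.degree < ((minpoly k[X] θ).map (evalRingHom a)).degree := by
    refine lt_of_le_of_lt (degree_sub_le _ _) (max_lt ?_ ?_)
    · rw [hmon.degree_map]
      exact lt_of_le_of_lt degree_map_le hudeg
    · exact lt_of_le_of_lt degree_C_le hirr.degree_pos
  have hcop := (hirr.coprime_iff_not_dvd (n := w)).2 (fun hd => by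
    have := degree_le_of_dvd hd hw0
    exact absurd hwdeg (not_lt.2 this))
  obtain ⟨b, c, hbc⟩ := hcop
  have := congrArg (eval₂ χ (ψ θ)) hbc
  simp [eval₂_add, eval₂_mul, hw, hΘ] at this


/-- partial products of linear factors -/
noncomputable def pz {O : Type*} [CommRing O] {N : ℕ} (l : O) (z : Fin N → O)
    (J : Finset (Fin N)) : O[X] := ∏ i ∈ J, (C l * X - C (z i))

lemma pz_map {O Ω : Type*} [CommRing O] [CommRing Ω] (f : O →+* Ω) {N : ℕ} (l : O)
    (z : Fin N → O) (J : Finset (Fin N)) :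
    (pz l z J).map f = pz (f l) (fun i => f (z i)) J := by
  simp [pz, Polynomial.map_prod]

lemma exists_roots {A L : Type*} [CommRing A] [Field L] [Algebra A L]
    [FaithfulSMul A L] (Q : A[X]) (hsp : (Q.map (algebraMap A L)).Splits) :
    ∃ (N : ℕ) (z : Fin N → integralClosure A L),
      C (algebraMap A (integralClosure A L) Q.leadingCoeff ^ N) *
        Q.map (algebraMap A (integralClosure A L)) =
      C (algebraMap A (integralClosure A L) Q.leadingCoeff) *
        pz (algebraMap A (integralClosure A L) Q.leadingCoeff) z Finset.univ := by
  have hinjA : Function.Injective (algebraMap A L) := FaithfulSMul.algebraMap_injective A L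
  have hinj : Function.Injective (algebraMap (integralClosure A L) L) := Subtype.val_injective
  let rs := (Q.map (algebraMap A L)).roots.toList
  have hz : ∀ i : Fin rs.length, IsIntegral A (Q.leadingCoeff • rs.get i) := by
    intro i
    apply isIntegral_leadingCoeff_smul
    have : rs.get i ∈ (Q.map (algebraMap A L)).roots := by
      rw [← Multiset.mem_toList]; exact List.get_mem _ _
    have := isRoot_of_mem_roots this
    rw [aeval_def, ← eval_map]
    exact this
  refine ⟨rs.length, fun i => ⟨_, hz i⟩, ?_⟩
  apply map_injective _ hinj
  rw [Polynomial.map_mul, Polynomial.map_mul, pz_map, map_map, ← IsScalarTower.algebraMap_eq,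
    map_C, map_C, map_pow, ← IsScalarTower.algebraMap_apply]
  have h1 := hsp.eq_prod_roots
  have h2 : ((Q.map (algebraMap A L)).roots.map (fun x => X - C x)).prod =
      ∏ i : Fin rs.length, (X - C (rs.get i)) := by
    rw [← Multiset.coe_toList (Q.map (algebraMap A L)).roots, Multiset.map_coe, Multiset.prod_coe]
    change (List.map _ rs).prod = _
    rw [← List.prod_ofFn]
    congr 1
    conv_lhs => rw [← List.ofFn_get rs]
    rw [List.map_ofFn]; rfl
  rw [h2, leadingCoeff_map_of_injective hinjA] at h1
  rw [h1, pz]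
  have h3 : ∀ i : Fin rs.length, (C (algebraMap A L Q.leadingCoeff) * X -
      C (algebraMap (integralClosure A L) L ⟨_, hz i⟩) : Polynomial L) =
      C (algebraMap A L Q.leadingCoeff) * (X - C (rs.get i)) := by
    intro i
    change _ - C (Q.leadingCoeff • rs.get i) = _
    rw [Algebra.smul_def, C_mul]; ring
  simp_rw [h3]
  rw [Finset.prod_mul_distrib]
  simp
  ring

lemma lifts_of_scalar {k Ω : Type*} [Field k] [Field Ω] (χ : k →+* Ω) (w : Polynomial Ω) (g : k[X])
    (β : Ω) (hβ : β ≠ 0) (h : g.map χ = C β * w) (r : k) (hr : r ≠ 0)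
    (hw : w.leadingCoeff = χ r) (j : ℕ) : w.coeff j ∈ Set.range χ := by
  have h1 : χ g.leadingCoeff = β * χ r := by
    have := congrArg leadingCoeff h
    rw [leadingCoeff_map, leadingCoeff_mul, leadingCoeff_C, hw] at this
    exact this
  have h2 : χ (g.coeff j) = β * w.coeff j := by
    rw [← coeff_map, h, coeff_C_mul]
  have hr' : χ r ≠ 0 := by simpa using hr
  refine ⟨g.coeff j * r / g.leadingCoeff, ?_⟩
  rw [map_div₀, map_mul, h1, h2]
  field_simp

lemma totalDegree_map_field {k Ω σ : Type*} [Field k] [CommRing Ω] [Nontrivial Ω] (χ : k →+* Ω)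
    (P : MvPolynomial σ k) : (MvPolynomial.map χ P).totalDegree = P.totalDegree := by
  simp only [MvPolynomial.totalDegree]
  rw [MvPolynomial.support_map_of_injective _ χ.injective]

/-- One subset of roots gives a factorization only for finitely many specializations. -/
lemma subset_step {k K L : Type} [Field k] [Field K] [Field L] [Algebra k[X] K]
    [IsFractionRing k[X] K] [Algebra K L] [FiniteDimensional K L]
    [Algebra k[X] L] [IsScalarTower k[X] K L] (θ : integralClosure k[X] L)
    (hθ : IntermediateField.adjoin K {(θ : L)} = ⊤) {n e N : ℕ}
    (P : MvPolynomial (Fin n) k[X]) (hP : Irreducible P) (hPd : P.totalDegree ≠ 0)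
    (l : k[X]) (hl : l ≠ 0) (z : Fin N → integralClosure k[X] L) (J J' : Finset (Fin N)) :
    ∃ δ : k[X], δ ≠ 0 ∧ ∀ a : k, δ.eval a ≠ 0 →
      Irreducible ((minpoly k[X] θ).map (evalRingHom a)) →
      ∀ (Ω : Type) [Field Ω] (χ : k →+* Ω) (ψ : integralClosure k[X] L →+* Ω),
      (∀ f : k[X], ψ (algebraMap k[X] (integralClosure k[X] L) f) = χ (f.eval a)) →
      (∀ j, ((pz (algebraMap _ _ l) z J).map ψ).coeff j ∈ Set.range χ) →
      (∀ j, ((pz (algebraMap _ _ l) z J').map ψ).coeff j ∈ Set.range χ) →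
      MvPolynomial.C (χ (l.eval a)) * (unkron Ω n e ((pz (algebraMap _ _ l) z J).map ψ) *
        unkron Ω n e ((pz (algebraMap _ _ l) z J').map ψ)) =
        MvPolynomial.C (χ (l.eval a) ^ N) *
          MvPolynomial.map χ (MvPolynomial.map (evalRingHom a) P) →
      (unkron Ω n e ((pz (algebraMap _ _ l) z J).map ψ)).totalDegree = 0 ∨
      (unkron Ω n e ((pz (algebraMap _ _ l) z J').map ψ)).totalDegree = 0 := by
  by_cases h1 : ∀ j, (pz (algebraMap _ _ l) z J).coeff j ∈
      Set.range (algebraMap k[X] (integralClosure k[X] L))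
  swap
  · push Not at h1
    obtain ⟨j, hj⟩ := h1
    obtain ⟨δ, hδ, H⟩ := spec_not_const (K := K) θ hθ _ hj
    refine ⟨δ, hδ, fun a ha hirr Ω _ χ ψ hψ hJ => ?_⟩
    have := hJ j
    rw [coeff_map] at this
    exact absurd this (H a ha hirr Ω χ ψ hψ)
  by_cases h2 : ∀ j, (pz (algebraMap _ _ l) z J').coeff j ∈
      Set.range (algebraMap k[X] (integralClosure k[X] L))
  swap
  · push Not at h2
    obtain ⟨j, hj⟩ := h2
    obtain ⟨δ, hδ, H⟩ := spec_not_const (K := K) θ hθ _ hj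
    refine ⟨δ, hδ, fun a ha hirr Ω _ χ ψ hψ _ hJ => ?_⟩
    have := hJ j
    rw [coeff_map] at this
    exact absurd this (H a ha hirr Ω χ ψ hψ)
  rw [← lifts_iff_coeff_lifts, mem_lifts] at h1 h2
  obtain ⟨p, hp⟩ := h1
  obtain ⟨q, hq⟩ := h2
  have hpsi : ∀ (a : k) (Ω : Type) [Field Ω] (χ : k →+* Ω) (ψ : integralClosure k[X] L →+* Ω),
      (∀ f : k[X], ψ (algebraMap k[X] (integralClosure k[X] L) f) = χ (f.eval a)) →
      ∀ r : k[X][X], unkron Ω n e ((r.map (algebraMap k[X] (integralClosure k[X] L))).map ψ) =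
        MvPolynomial.map χ (MvPolynomial.map (evalRingHom a) (unkron k[X] n e r)) := by
    intro a Ω _ χ ψ hψ r
    rw [map_map, unkron_map, MvPolynomial.map_map]
    congr 2
    ext f <;> simp [hψ]
  rw [← hp, ← hq]
  by_cases h3 : MvPolynomial.C l * (unkron k[X] n e p * unkron k[X] n e q) =
      MvPolynomial.C (l ^ N) * P
  · refine ⟨1, one_ne_zero, fun a _ _ Ω _ χ ψ hψ _ _ _ => ?_⟩
    rw [hpsi a Ω χ ψ hψ, hpsi a Ω χ ψ hψ, totalDegree_map_field, totalDegree_map_field]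
    have hprime : Prime P := hP.prime
    have hlN : (MvPolynomial.C (l ^ N) : MvPolynomial (Fin n) k[X]) ≠ 0 := by
      simpa using pow_ne_zero N hl
    have hred : ∀ s : k[X], s ≠ 0 → ¬ P ∣ MvPolynomial.C s := by
      intro s hs hd
      have := MvPolynomial.totalDegree_le_of_dvd_of_isDomain hd (by simpa using hs)
      rw [MvPolynomial.totalDegree_C] at this
      omega
    have hconst : ∀ f g : MvPolynomial (Fin n) k[X],
        MvPolynomial.C l * (f * g) = MvPolynomial.C (l ^ N) * P → P ∣ f →
        (MvPolynomial.map (evalRingHom a) g).totalDegree = 0 := by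
      rintro f g hfg ⟨s, rfl⟩
      have h5 : MvPolynomial.C l * (s * g) = MvPolynomial.C (l ^ N) :=
        mul_right_cancel₀ hprime.ne_zero (by linear_combination hfg)
      have h6 : g ∣ MvPolynomial.C (l ^ N) := ⟨MvPolynomial.C l * s, by linear_combination -h5⟩
      have := MvPolynomial.totalDegree_le_of_dvd_of_isDomain h6 hlN
      rw [MvPolynomial.totalDegree_C, nonpos_iff_eq_zero,
        MvPolynomial.totalDegree_eq_zero_iff_eq_C] at this
      rw [this, MvPolynomial.map_C, MvPolynomial.totalDegree_C]
    have hd : P ∣ MvPolynomial.C l * (unkron k[X] n e p * unkron k[X] n e q) :=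
      ⟨_, h3.trans (mul_comm _ _)⟩
    rcases hprime.dvd_or_dvd hd with h4 | h4
    · exact absurd h4 (hred l hl)
    rcases hprime.dvd_or_dvd h4 with h4 | h4
    · right; exact hconst _ _ h3 h4
    · left; exact hconst _ _ (by rw [mul_comm (unkron k[X] n e q)]; exact h3) h4
  · obtain ⟨m, hm⟩ : ∃ m, MvPolynomial.coeff m (MvPolynomial.C l *
        (unkron k[X] n e p * unkron k[X] n e q) - MvPolynomial.C (l ^ N) * P) ≠ 0 := by
      rw [← MvPolynomial.ne_zero_iff]
      exact sub_ne_zero.2 h3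
    refine ⟨_, hm, fun a ha _ Ω _ χ ψ hψ _ _ heq => ?_⟩
    exfalso
    apply ha
    rw [hpsi a Ω χ ψ hψ, hpsi a Ω χ ψ hψ] at heq
    have h7 : MvPolynomial.map χ (MvPolynomial.map (evalRingHom a) (MvPolynomial.C l *
        (unkron k[X] n e p * unkron k[X] n e q) - MvPolynomial.C (l ^ N) * P)) = 0 := by
      simp only [map_sub, map_mul, MvPolynomial.map_C, coe_evalRingHom, eval_pow, map_pow] at heq ⊢
      rw [heq, sub_self]
    have h8 := congrArg (MvPolynomial.coeff m) h7
    rw [MvPolynomial.coeff_map, MvPolynomial.coeff_map, MvPolynomial.coeff_zero] at h8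
    exact χ.injective (by rw [map_zero]; exact h8)


lemma pz_leadingCoeff {Ω : Type*} [Field Ω] {N : ℕ} (l : Ω) (hl : l ≠ 0)
    (z : Fin N → Ω) (J : Finset (Fin N)) : (pz l z J).leadingCoeff = l ^ J.card := by
  rw [pz, leadingCoeff_prod]
  have : ∀ i, (C l * X - C (z i)).leadingCoeff = l := by
    intro i
    rw [sub_eq_add_neg, ← C_neg, leadingCoeff_linear hl]
  simp [this]

lemma hilbert_step_aux {k K L : Type} [Field k] [CharZero k] (hk : IsHilbertian k) {n e : ℕ}
    [Field K] [Field L] [Algebra k[X] K] [IsFractionRing k[X] K] [CharZero K]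
    [Algebra K L] [FiniteDimensional K L] [Algebra k[X] L] [IsScalarTower k[X] K L]
    [FaithfulSMul k[X] L]
    (P : MvPolynomial (Fin n) k[X]) (hP : Irreducible P) (hPd : P.totalDegree ≠ 0)
    (he : e = P.totalDegree + 1) (Q : k[X][X]) (hQdef : Q = kron k[X] n e P) (hQ : Q ≠ 0)
    (hsp : (Q.map (algebraMap k[X] L)).Splits) :
    ∃ a : k, Irreducible (MvPolynomial.map (evalRingHom a) P) := by
  classical
  obtain ⟨N, z, hz⟩ := exists_roots Q hsp
  set l := Q.leadingCoeff with hldef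
  have hl : l ≠ 0 := leadingCoeff_ne_zero.2 hQ
  obtain ⟨θ, hθ⟩ : ∃ θ : integralClosure k[X] L,
      IntermediateField.adjoin K {(θ : L)} = ⊤ := by
    obtain ⟨α, hα⟩ := Field.exists_primitive_element K L
    have halg : IsAlgebraic k[X] α :=
      (IsFractionRing.isAlgebraic_iff k[X] K L).2 (Algebra.IsAlgebraic.isAlgebraic α)
    obtain ⟨y, hy, hIntg⟩ := halg.exists_integral_multiple
    refine ⟨⟨_, hIntg⟩, ?_⟩
    rw [eq_top_iff, ← hα, IntermediateField.adjoin_simple_le_iff]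
    have h1 : y • α ∈ IntermediateField.adjoin K {y • α} :=
      IntermediateField.mem_adjoin_simple_self K _
    have hy' : algebraMap k[X] K y ≠ 0 := by simpa using hy
    have h2 : α = (algebraMap k[X] K y)⁻¹ • (y • α) := by
      rw [← algebraMap_smul K y α, smul_smul, inv_mul_cancel₀ hy', one_smul]
    have h3 := IntermediateField.smul_mem _ h1 (x := (algebraMap k[X] K y)⁻¹)
    rw [← h2] at h3
    exact h3
  have hIntg : IsIntegral k[X] θ := Algebra.IsIntegral.isIntegral θ
  have hinf := hilbert_monic hk (minpoly k[X] θ) (minpoly.monic hIntg) (minpoly.irreducible hIntg)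
  choose δ hδ H using fun J : Finset (Fin N) × Finset (Fin N) =>
    subset_step (K := K) θ hθ (e := e) P hP hPd l hl z J.1 J.2
  obtain ⟨m, hmP, hm⟩ : ∃ m ∈ P.support, m ≠ 0 := by
    by_contra hcon
    push Not at hcon
    apply hPd
    rw [MvPolynomial.totalDegree_eq_zero_iff]
    intro m hm x
    rw [hcon m hm]; rfl
  let bad : k[X] := l * MvPolynomial.coeff m P * ∏ J, δ J
  have hbad : bad ≠ 0 := mul_ne_zero (mul_ne_zero hl (MvPolynomial.mem_support_iff.1 hmP))
    (Finset.prod_ne_zero_iff.2 fun J _ => hδ J)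
  have hfin : {a : k | bad.eval a = 0}.Finite := by
    refine (Finset.finite_toSet bad.roots.toFinset).subset ?_
    intro a ha
    simpa [hbad] using ha
  obtain ⟨a, haI, hab⟩ := hinf.exists_notMem_finite hfin
  simp only [Set.mem_ofPred_eq] at haI hab
  rw [eval_mul, eval_mul, eval_prod] at hab
  have hla : l.eval a ≠ 0 := left_ne_zero_of_mul (left_ne_zero_of_mul hab)
  have hma : (MvPolynomial.coeff m P).eval a ≠ 0 := right_ne_zero_of_mul (left_ne_zero_of_mul hab)
  have hδa : ∀ J, (δ J).eval a ≠ 0 := fun J =>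
    Finset.prod_ne_zero_iff.1 (right_ne_zero_of_mul hab) J (Finset.mem_univ _)
  refine ⟨a, ?_⟩
  obtain ⟨q, hq, hqf⟩ := spec_exists (L := L) a
  letI : Field (integralClosure k[X] L ⧸ q) := Ideal.Quotient.field q
  let Ω := integralClosure k[X] L ⧸ q
  let ψ : integralClosure k[X] L →+* Ω := Ideal.Quotient.mk q
  let χ : k →+* Ω := (ψ.comp (algebraMap k[X] (integralClosure k[X] L))).comp C
  have hψ : ∀ f : k[X], ψ (algebraMap k[X] (integralClosure k[X] L) f) = χ (f.eval a) := hqf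
  set Pa := MvPolynomial.map (evalRingHom a) P with hPa
  have hPam : MvPolynomial.coeff m Pa ≠ 0 := by
    rw [hPa, MvPolynomial.coeff_map]; exact hma
  have hPa0 : Pa ≠ 0 := by
    intro h; rw [h] at hPam; simp at hPam
  have hPad : Pa.totalDegree < e := by
    rw [he]
    apply Nat.lt_succ_of_le
    simp only [MvPolynomial.totalDegree]
    exact Finset.sup_mono (MvPolynomial.support_map_subset _ _)
  have hunit : ∀ f : MvPolynomial (Fin n) k, f ≠ 0 → f.totalDegree = 0 → IsUnit f := by
    intro f hf h0
    rw [MvPolynomial.totalDegree_eq_zero_iff_eq_C] at h0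
    rw [h0] at hf ⊢
    exact (IsUnit.mk0 _ (by simpa using hf)).map MvPolynomial.C
  constructor
  · intro hu
    have h0 := (MvPolynomial.isUnit_iff_totalDegree_of_isReduced.1 hu).2
    rw [MvPolynomial.totalDegree_eq_zero_iff_eq_C] at h0
    rw [h0, MvPolynomial.coeff_C, if_neg hm.symm] at hPam
    exact hPam rfl
  intro A B hAB
  have hA0 : A ≠ 0 := fun h => hPa0 (by rw [hAB, h, zero_mul])
  have hB0 : B ≠ 0 := fun h => hPa0 (by rw [hAB, h, mul_zero])
  have hAd : A.totalDegree < e := lt_of_le_of_lt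
    (MvPolynomial.totalDegree_le_of_dvd_of_isDomain ⟨B, hAB⟩ hPa0) hPad
  have hBd : B.totalDegree < e := lt_of_le_of_lt
    (MvPolynomial.totalDegree_le_of_dvd_of_isDomain ⟨A, hAB.trans (mul_comm _ _)⟩ hPa0) hPad
  set lam : Ω := χ (l.eval a) with hlam
  have hlam0 : lam ≠ 0 := by simpa [hlam] using hla
  -- specialized product formula
  have hzψ : C (lam ^ N) * ((kron k n e A).map χ * (kron k n e B).map χ) =
      C lam * pz lam (fun i => ψ (z i)) Finset.univ := by
    have h1 := congrArg (Polynomial.map ψ) hz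
    rw [Polynomial.map_mul, Polynomial.map_mul, pz_map, map_C, map_C, map_pow, hψ] at h1
    rw [← h1, ← Polynomial.map_mul, ← map_mul, ← hAB, hPa, kron_map, hQdef, map_map, map_map]
    congr 2
    ext f <;> simp [hψ]
  have hprime : ∀ i ∈ (Finset.univ : Finset (Fin N)), Prime (C lam * X - C (ψ (z i))) := by
    intro i _
    rw [← irreducible_iff_prime]
    apply irreducible_of_degree_eq_one
    rw [sub_eq_add_neg, ← C_neg]
    exact degree_linear hlam0
  have hzψ' : (C (lam ^ N) * (kron k n e A).map χ) * (kron k n e B).map χ =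
      C lam * ∏ i ∈ (Finset.univ : Finset (Fin N)), (C lam * X - C (ψ (z i))) := by
    rw [mul_assoc]; exact hzψ
  obtain ⟨J, J', b, c, -, -, hbc, hx, hy⟩ := mul_eq_mul_prime_prod hprime hzψ'
  have hbcu : IsUnit (b * c) := by
    rw [← hbc]; exact (IsUnit.mk0 _ hlam0).map C
  obtain ⟨β, hβ, rfl⟩ := Polynomial.isUnit_iff.1 (isUnit_of_mul_isUnit_left hbcu)
  obtain ⟨γ, hγ, rfl⟩ := Polynomial.isUnit_iff.1 (isUnit_of_mul_isUnit_right hbcu)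
  have hβγ : lam = β * γ := by
    rw [← C_mul] at hbc; exact C_injective hbc
  change _ = C β * pz lam (fun i => ψ (z i)) J at hx
  change _ = C γ * pz lam (fun i => ψ (z i)) J' at hy
  have hlead : ∀ J : Finset (Fin N), (pz lam (fun i => ψ (z i)) J).leadingCoeff =
      χ (l.eval a ^ J.card) := by
    intro J; rw [pz_leadingCoeff _ hlam0, map_pow]
  have hpzJ : ∀ J : Finset (Fin N),
      (pz (algebraMap k[X] (integralClosure k[X] L) l) z J).map ψ =
        pz lam (fun i => ψ (z i)) J := by
    intro J; rw [pz_map, hψ]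
  have hcJ : ∀ j, (pz lam (fun i => ψ (z i)) J).coeff j ∈ Set.range χ :=
    lifts_of_scalar χ _ (C (l.eval a ^ N) * kron k n e A) β hβ.ne_zero
      (by rw [← hx, Polynomial.map_mul, map_C, map_pow]) _ (pow_ne_zero _ hla) (hlead J)
  have hcJ' : ∀ j, (pz lam (fun i => ψ (z i)) J').coeff j ∈ Set.range χ :=
    lifts_of_scalar χ _ (kron k n e B) γ hγ.ne_zero hy _ (pow_ne_zero _ hla) (hlead J')
  have hA : MvPolynomial.C (lam ^ N) * MvPolynomial.map χ A =
      MvPolynomial.C β * unkron Ω n e (pz lam (fun i => ψ (z i)) J) := by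
    have h1 := congrArg (unkron Ω n e) hx
    rw [← smul_eq_C_mul, ← smul_eq_C_mul, map_smul, map_smul, unkron_map,
      unkron_kron n e A hAd, MvPolynomial.smul_eq_C_mul, MvPolynomial.smul_eq_C_mul] at h1
    exact h1
  have hB : MvPolynomial.map χ B =
      MvPolynomial.C γ * unkron Ω n e (pz lam (fun i => ψ (z i)) J') := by
    have h1 := congrArg (unkron Ω n e) hy
    rw [← smul_eq_C_mul, map_smul, unkron_map,
      unkron_kron n e B hBd, MvPolynomial.smul_eq_C_mul] at h1
    exact h1
  have hfinal := H (J, J') a (hδa _) haI Ω χ ψ hψ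
  simp only [hpzJ] at hfinal
  have hres := hfinal hcJ hcJ' (by
    rw [← hPa, hAB, map_mul, ← hlam, hβγ, MvPolynomial.C_mul, ← hβγ]
    calc _ = (MvPolynomial.C β * unkron Ω n e (pz lam (fun i => ψ (z i)) J)) *
        (MvPolynomial.C γ * unkron Ω n e (pz lam (fun i => ψ (z i)) J')) := by ring
      _ = _ := by rw [← hA, ← hB, mul_assoc])
  rcases hres with h0 | h0
  · left
    apply hunit A hA0
    rw [← totalDegree_map_field χ]
    rw [MvPolynomial.totalDegree_eq_zero_iff_eq_C] at h0
    have hu : lam ^ N ≠ 0 := pow_ne_zero _ hlam0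
    have h2 : MvPolynomial.map χ A = MvPolynomial.C ((lam ^ N)⁻¹) *
        (MvPolynomial.C β * unkron Ω n e (pz lam (fun i => ψ (z i)) J)) := by
      rw [← hA, ← mul_assoc, ← MvPolynomial.C_mul, inv_mul_cancel₀ hu, MvPolynomial.C_1, one_mul]
    rw [h2, h0, ← MvPolynomial.C_mul, ← MvPolynomial.C_mul, MvPolynomial.totalDegree_C]
  · right
    apply hunit B hB0
    rw [← totalDegree_map_field χ]
    rw [MvPolynomial.totalDegree_eq_zero_iff_eq_C] at h0
    rw [hB, h0, ← MvPolynomial.C_mul, MvPolynomial.totalDegree_C]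

lemma hilbert_step {k : Type} [Field k] [CharZero k] (hk : IsHilbertian k) {n : ℕ}
    (P : MvPolynomial (Fin n) k[X]) (hP : Irreducible P) (hPd : P.totalDegree ≠ 0) :
    ∃ a : k, Irreducible (MvPolynomial.map (evalRingHom a) P) := by
  classical
  let e := P.totalDegree + 1
  let Q := kron k[X] n e P
  have hQ : Q ≠ 0 := by
    intro h
    have h1 := unkron_kron n e P (Nat.lt_succ_self _)
    change unkron k[X] n e Q = P at h1
    rw [h, map_zero] at h1
    exact hP.ne_zero h1.symm
  let K := FractionRing k[X]
  let L := (Q.map (algebraMap k[X] K)).SplittingField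
  have : CharZero K := charZero_of_injective_algebraMap (IsFractionRing.injective k[X] K)
  have : FiniteDimensional K L := inferInstance
  have : IsScalarTower k[X] K L := inferInstance
  have hfaith : FaithfulSMul k[X] L := by
    rw [faithfulSMul_iff_algebraMap_injective, IsScalarTower.algebraMap_eq k[X] K L]
    exact (algebraMap K L).injective.comp (IsFractionRing.injective k[X] K)
  have hsp : (Q.map (algebraMap k[X] L)).Splits := by
    have := SplittingField.splits (Q.map (algebraMap k[X] K))
    rwa [map_map, ← IsScalarTower.algebraMap_eq] at this
  exact hilbert_step_aux (K := K) (L := L) hk P hP hPd rfl Q rfl hQ hsp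


/-- `finSuccEquiv` commutes with coefficient maps. -/
lemma finSuccEquiv_symm_map {A B : Type} [CommRing A] [CommRing B] (f : A →+* B) (n : ℕ)
    (G : Polynomial (MvPolynomial (Fin n) A)) :
    MvPolynomial.map f ((MvPolynomial.finSuccEquiv A n).symm G) =
      (MvPolynomial.finSuccEquiv B n).symm (G.map (MvPolynomial.map f)) := by
  rw [AlgEquiv.eq_symm_apply]
  obtain ⟨P, rfl⟩ := (MvPolynomial.finSuccEquiv A n).surjective G
  rw [AlgEquiv.symm_apply_apply]
  have : (MvPolynomial.finSuccEquiv B n).toRingEquiv.toRingHom.comp (MvPolynomial.map f) =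
      (Polynomial.mapRingHom (MvPolynomial.map f)).comp
        (MvPolynomial.finSuccEquiv A n).toRingEquiv.toRingHom := by
    apply MvPolynomial.ringHom_ext
    · intro r
      simp [MvPolynomial.finSuccEquiv_apply]
    · intro i
      refine Fin.cases ?_ (fun j => ?_) i
      · simp [MvPolynomial.finSuccEquiv_X_zero]
      · simp [MvPolynomial.finSuccEquiv_X_succ]
  exact congrArg (fun g => g P) this

/-- Hilbert irreducibility in several parameters for monic polynomials. -/
lemma hilbert_multi {k : Type} [Field k] [CharZero k] (hk : IsHilbertian k) :
    ∀ (n : ℕ) (G : Polynomial (MvPolynomial (Fin n) k)), G.Monic → Irreducible G →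
      ∃ t0 : Fin n → k, Irreducible (G.map (MvPolynomial.eval t0)) := by
  intro n
  induction n with
  | zero =>
    intro G hm hG
    refine ⟨Fin.elim0, ?_⟩
    have h : (MvPolynomial.eval (Fin.elim0 : Fin 0 → k)) =
        (MvPolynomial.isEmptyRingEquiv k (Fin 0)).toRingHom := by
      apply MvPolynomial.ringHom_ext
      · intro r
        have h1 : MvPolynomial.isEmptyRingEquiv k (Fin 0) (MvPolynomial.C r) = r := by
          rw [← RingEquiv.eq_symm_apply]
          rfl
        simpa using h1.symm
      · intro i
        exact i.elim0
    rw [h]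
    have := (MulEquiv.irreducible_iff
      (Polynomial.mapEquiv (MvPolynomial.isEmptyRingEquiv k (Fin 0)))).2 hG
    simpa using this
  | succ n ih =>
    intro G hm hG
    let ε : MvPolynomial (Fin (n + 1)) k ≃+* MvPolynomial (Fin n) k[X] :=
      ((MvPolynomial.renameEquiv k (_root_.finSuccEquiv n)).trans
        (MvPolynomial.optionEquivRight k (Fin n))).toRingEquiv
    have hG1 : Irreducible (G.map ε.toRingHom) := by
      have := (MulEquiv.irreducible_iff (Polynomial.mapEquiv ε)).2 hG
      simpa using this
    have hm1 : (G.map ε.toRingHom).Monic := hm.map _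
    set G1 := G.map ε.toRingHom with hG1def
    have hP : Irreducible ((MvPolynomial.finSuccEquiv k[X] n).symm G1) :=
      (MulEquiv.irreducible_iff (MvPolynomial.finSuccEquiv k[X] n).symm).2 hG1
    have hPd : ((MvPolynomial.finSuccEquiv k[X] n).symm G1).totalDegree ≠ 0 := by
      intro h0
      rw [MvPolynomial.totalDegree_eq_zero_iff_eq_C] at h0
      have h1 := congrArg (MvPolynomial.finSuccEquiv k[X] n) h0
      rw [AlgEquiv.apply_symm_apply] at h1
      have h2 : G1.natDegree = 0 := by
        rw [h1]
        simp [MvPolynomial.finSuccEquiv_apply]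
      have h3 := hm1.natDegree_eq_zero.1 h2
      exact hG1.not_isUnit (h3 ▸ isUnit_one)
    obtain ⟨a, ha⟩ := hilbert_step hk _ hP hPd
    rw [finSuccEquiv_symm_map] at ha
    have ha2 := (MulEquiv.irreducible_iff (MvPolynomial.finSuccEquiv k n).symm).1 ha
    obtain ⟨t1, ht1⟩ := ih _ (hm1.map _) ha2
    refine ⟨Fin.cons a t1, ?_⟩
    rw [hG1def, Polynomial.map_map, Polynomial.map_map] at ht1
    convert ht1 using 2
    apply MvPolynomial.ringHom_ext
    · intro r
      simp [ε, MvPolynomial.optionEquivRight_C]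
    · intro i
      refine Fin.cases ?_ (fun j => ?_) i
      · simp [ε, MvPolynomial.optionEquivRight_X_none]
      · simp [ε, MvPolynomial.optionEquivRight_X_some]

/-- The degree comparison at the heart of the theorem. -/
lemma finrank_core {k : Type} [Field k] [CharZero k] (hk : IsHilbertian k) (n : ℕ)
    (R S : Type) [CommRing R] [CommRing S] [IsDomain R] [IsDomain S]
    [Algebra k R] [Algebra k S]
    [Algebra (MvPolynomial (Fin n) k) R] [Algebra (MvPolynomial (Fin n) k) S] [Algebra R S]
    [IsScalarTower k (MvPolynomial (Fin n) k) R]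
    [IsScalarTower k R S]
    [IsScalarTower (MvPolynomial (Fin n) k) R S]
    [Module.Finite (MvPolynomial (Fin n) k) R] [Module.Finite R S]
    [FaithfulSMul (MvPolynomial (Fin n) k) R] [FaithfulSMul (MvPolynomial (Fin n) k) S]
    (KB KR F : Type) [Field KB] [Field KR] [Field F]
    [Algebra (MvPolynomial (Fin n) k) KB] [IsFractionRing (MvPolynomial (Fin n) k) KB]
    [Algebra R KR] [IsFractionRing R KR] [Algebra S F] [IsFractionRing S F]
    [Algebra (MvPolynomial (Fin n) k) KR] [Algebra (MvPolynomial (Fin n) k) F]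
    [Algebra KB KR] [Algebra KB F] [Algebra KR F] [IsScalarTower KB KR F]
    [IsScalarTower (MvPolynomial (Fin n) k) R KR] [IsScalarTower (MvPolynomial (Fin n) k) S F]
    [IsScalarTower (MvPolynomial (Fin n) k) KB KR] [IsScalarTower (MvPolynomial (Fin n) k) KB F]
    [Algebra.FiniteType k R]
    (hsurj : ∀ (h : Type) [Field h] [Algebra k h] [FiniteDimensional k h]
      (ψ : R →ₐ[k] h), ∃ χ : S →ₐ[k] h, ∀ r, χ (algebraMap R S r) = ψ r) :
    Module.finrank KR F = 1 := by
  have : Module.Finite (MvPolynomial (Fin n) k) S := Module.Finite.trans R S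
  have hRi : Algebra.IsIntegral (MvPolynomial (Fin n) k) R := inferInstance
  have hSi : Algebra.IsIntegral (MvPolynomial (Fin n) k) S := inferInstance
  have : FiniteDimensional KB KR :=
    Module.Finite.of_isLocalization (MvPolynomial (Fin n) k) R
      (nonZeroDivisors (MvPolynomial (Fin n) k))
  have : FiniteDimensional KB F :=
    Module.Finite.of_isLocalization (MvPolynomial (Fin n) k) S
      (nonZeroDivisors (MvPolynomial (Fin n) k))
  have : FiniteDimensional KR F := FiniteDimensional.right KB KR F
  have : CharZero (MvPolynomial (Fin n) k) :=
    charZero_of_injective_algebraMap (FaithfulSMul.algebraMap_injective k _)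
  have : CharZero KB :=
    charZero_of_injective_algebraMap (IsFractionRing.injective (MvPolynomial (Fin n) k) KB)
  -- a primitive element in `S`
  obtain ⟨θ, hθ⟩ : ∃ θ : S, IntermediateField.adjoin KB {algebraMap S F θ} = ⊤ := by
    obtain ⟨x, hx⟩ := Field.exists_primitive_element KB F
    obtain ⟨a, s, hs, rfl⟩ := IsFractionRing.div_surjective (A := S) x
    obtain ⟨b, hb, c, hc⟩ := (hSi.1 s).isAlgebraic.exists_nonzero_dvd hs
    refine ⟨c * a, ?_⟩
    rw [← hx]
    have hs0 : algebraMap S F s ≠ 0 :=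
      IsFractionRing.to_map_ne_zero_of_mem_nonZeroDivisors hs
    have hb0 : algebraMap (MvPolynomial (Fin n) k) KB b ≠ 0 := by
      simpa using hb
    have e1 : algebraMap KB F (algebraMap _ KB b) = algebraMap S F s * algebraMap S F c := by
      rw [← IsScalarTower.algebraMap_apply, IsScalarTower.algebraMap_apply _ S F, hc, map_mul]
    have e2 : algebraMap S F (c * a) =
        algebraMap KB F (algebraMap _ KB b) * (algebraMap S F a / algebraMap S F s) := by
      rw [e1, map_mul]
      field_simp
    apply le_antisymm
    · rw [IntermediateField.adjoin_simple_le_iff, e2]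
      exact mul_mem (IntermediateField.algebraMap_mem _ _)
        (IntermediateField.mem_adjoin_simple_self _ _)
    · rw [IntermediateField.adjoin_simple_le_iff]
      have e3 : algebraMap S F a / algebraMap S F s =
          algebraMap KB F (algebraMap _ KB b)⁻¹ * algebraMap S F (c * a) := by
        have : algebraMap KB F (algebraMap _ KB b) ≠ 0 := by simpa using hb0
        rw [e2, map_inv₀, inv_mul_cancel_left₀ this]
      rw [e3]
      exact mul_mem (IntermediateField.algebraMap_mem _ _)
        (IntermediateField.mem_adjoin_simple_self _ _)
  have hN : (minpoly (MvPolynomial (Fin n) k) θ).natDegree = Module.finrank KB F := by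
    rw [← (Field.primitive_element_iff_minpoly_natDegree_eq KB _).1 hθ,
      minpoly.isIntegrallyClosed_eq_field_fractions KB F (hSi.1 θ),
      (minpoly.monic (hSi.1 θ)).natDegree_map]
  obtain ⟨t0, ht0⟩ := hilbert_multi hk n _ (minpoly.monic (hSi.1 θ)) (minpoly.irreducible (hSi.1 θ))
  -- the point of `X`
  have hmax : (RingHom.ker (MvPolynomial.eval t0)).IsMaximal := by
    apply RingHom.ker_isMaximal_of_surjective
    intro c
    exact ⟨MvPolynomial.C c, by simp⟩
  obtain ⟨q, hq, hqc⟩ := Ideal.exists_ideal_over_maximal_of_isIntegral (S := R)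
    (RingHom.ker (MvPolynomial.eval t0)) (by
      rw [(RingHom.injective_iff_ker_eq_bot (algebraMap (MvPolynomial (Fin n) k) R)).1
        (FaithfulSMul.algebraMap_injective _ R)]
      exact bot_le)
  letI : Field (R ⧸ q) := Ideal.Quotient.field q
  have hfinq : Module.Finite k (R ⧸ q) := finite_of_finite_type_of_isJacobsonRing k (R ⧸ q)
  have hev : ∀ b : MvPolynomial (Fin n) k,
      (Ideal.Quotient.mkₐ k q) (algebraMap _ R b) =
        algebraMap k (R ⧸ q) (MvPolynomial.eval t0 b) := by
    intro b
    have h1 : b - MvPolynomial.C (MvPolynomial.eval t0 b) ∈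
        RingHom.ker (MvPolynomial.eval t0) := by
      rw [RingHom.mem_ker]
      simp
    rw [← hqc, Ideal.mem_comap, map_sub] at h1
    have h2 := (Ideal.Quotient.eq (I := q)).2 h1
    have h3 : algebraMap (MvPolynomial (Fin n) k) R (MvPolynomial.C (MvPolynomial.eval t0 b)) =
        algebraMap k R (MvPolynomial.eval t0 b) := by
      rw [IsScalarTower.algebraMap_apply k (MvPolynomial (Fin n) k) R]
      rfl
    rw [h3] at h2
    exact h2
  obtain ⟨χ, hχ⟩ := hsurj (R ⧸ q) (Ideal.Quotient.mkₐ k q)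
  have hevS : ∀ b : MvPolynomial (Fin n) k,
      χ (algebraMap _ S b) = algebraMap k (R ⧸ q) (MvPolynomial.eval t0 b) := by
    intro b
    rw [IsScalarTower.algebraMap_apply _ R S, hχ, hev]
  -- lower bound for the residue degree
  have hle1 : Module.finrank KB F ≤ Module.finrank k (R ⧸ q) := by
    have hroot : aeval (χ θ) ((minpoly (MvPolynomial (Fin n) k) θ).map (MvPolynomial.eval t0)) =
        0 := by
      rw [aeval_def, eval₂_map]
      have : (algebraMap k (R ⧸ q)).comp (MvPolynomial.eval t0) =
          (χ : S →+* R ⧸ q).comp (algebraMap (MvPolynomial (Fin n) k) S) := by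
        refine RingHom.ext fun b => ?_
        exact (hevS b).symm
      rw [this]
      have h4 := hom_eval₂ (minpoly (MvPolynomial (Fin n) k) θ)
        (algebraMap (MvPolynomial (Fin n) k) S) (χ : S →+* R ⧸ q) θ
      rw [← aeval_def, minpoly.aeval, map_zero] at h4
      exact h4.symm
    have := minpoly.eq_of_irreducible_of_monic ht0 hroot ((minpoly.monic (hSi.1 θ)).map _)
    rw [← hN, ← (minpoly.monic (hSi.1 θ)).natDegree_map (MvPolynomial.eval t0), this]
    exact minpoly.natDegree_le _
  -- upper bound
  have hle2 : Module.finrank k (R ⧸ q) ≤ Module.finrank KB KR := by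
    obtain ⟨αb, hαb⟩ := Field.exists_primitive_element k (R ⧸ q)
    obtain ⟨α, rfl⟩ := Ideal.Quotient.mkₐ_surjective k q αb
    have hroot : aeval (Ideal.Quotient.mkₐ k q α)
        ((minpoly (MvPolynomial (Fin n) k) α).map (MvPolynomial.eval t0)) = 0 := by
      rw [aeval_def, eval₂_map]
      have : (algebraMap k (R ⧸ q)).comp (MvPolynomial.eval t0) =
          (Ideal.Quotient.mkₐ k q : R →+* R ⧸ q).comp
            (algebraMap (MvPolynomial (Fin n) k) R) := by
        refine RingHom.ext fun b => ?_
        exact (hev b).symm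
      rw [this]
      have h4 := hom_eval₂ (minpoly (MvPolynomial (Fin n) k) α)
        (algebraMap (MvPolynomial (Fin n) k) R) (Ideal.Quotient.mkₐ k q : R →+* R ⧸ q) α
      rw [← aeval_def, minpoly.aeval, map_zero] at h4
      exact h4.symm
    have hmon := (minpoly.monic (hRi.1 α)).map (MvPolynomial.eval t0)
    rw [← (Field.primitive_element_iff_minpoly_natDegree_eq k _).1 hαb]
    have h5 := natDegree_le_of_dvd (minpoly.dvd k _ hroot) hmon.ne_zero
    rw [(minpoly.monic (hRi.1 α)).natDegree_map] at h5
    refine h5.trans ?_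
    rw [← (minpoly.monic (hRi.1 α)).natDegree_map (algebraMap (MvPolynomial (Fin n) k) KB),
      ← minpoly.isIntegrallyClosed_eq_field_fractions KB KR (hRi.1 α)]
    exact minpoly.natDegree_le _
  have hmul := Module.finrank_mul_finrank KB KR F
  have hpos : 0 < Module.finrank KB KR := Module.finrank_pos
  have hpos2 : 0 < Module.finrank KR F := Module.finrank_pos
  have hle := hle1.trans hle2
  rw [← hmul] at hle
  have : Module.finrank KR F ≤ 1 := Nat.le_of_mul_le_mul_left (by simpa using hle) hpos
  omega

end HilbAux

/--
Let `k` be a Hilbertian field of characteristic 0 and `f : Y → X` a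
finite dominant morphism of affine integral schemes of finite type over `k`.
Algebraically: `X = Spec R`, `Y = Spec S` with `R`, `S` integral domains which are
finitely generated `k`-algebras, and `f` corresponds to an injective (dominance) finite
`k`-algebra homomorphism `φ : R → S`.  An `h`-point of `X` is a `k`-algebra homomorphism
`R →ₐ[k] h`, and the map `Y (h) → X (h)` is composition with `φ`.  If `Y (h) → X (h)` is
surjective for every finite field extension `h/k`, then `f` is birational, i.e. the
induced extension of function fields `k(X) = Frac R → Frac S = k(Y)` is an isomorphism.
-/
theorem stmt_4 (k : Type) [Field k] [CharZero k] (hk : IsHilbertian k)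
    (R S : Type) [CommRing R] [CommRing S] [IsDomain R] [IsDomain S]
    [Algebra k R] [Algebra k S]
    (hR : Algebra.FiniteType k R) (hS : Algebra.FiniteType k S)
    (φ : R →ₐ[k] S) (hdom : Function.Injective φ) (hfin : φ.Finite)
    (hsurj : ∀ (h : Type) [Field h] [Algebra k h] [FiniteDimensional k h]
      (ψ : R →ₐ[k] h), ∃ χ : S →ₐ[k] h, χ.comp φ = ψ) :
    Function.Bijective
      (IsFractionRing.lift
        (g := ((algebraMap S (FractionRing S)).comp (φ : R →+* S)))
        ((IsFractionRing.injective S (FractionRing S)).comp hdom) :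
        FractionRing R →+* FractionRing S) := by
  obtain ⟨n, g, hg, hgf⟩ := exists_finite_inj_algHom_of_fg k R
  letI : Algebra (MvPolynomial (Fin n) k) R := g.toRingHom.toAlgebra
  letI : Algebra R S := φ.toRingHom.toAlgebra
  letI : Algebra (MvPolynomial (Fin n) k) S := (φ.toRingHom.comp g.toRingHom).toAlgebra
  haveI : IsScalarTower k (MvPolynomial (Fin n) k) R :=
    IsScalarTower.of_algebraMap_eq fun x => (g.commutes x).symm
  haveI : IsScalarTower k R S := IsScalarTower.of_algebraMap_eq fun x => (φ.commutes x).symm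
  haveI : IsScalarTower (MvPolynomial (Fin n) k) R S :=
    IsScalarTower.of_algebraMap_eq fun x => rfl
  haveI : Module.Finite (MvPolynomial (Fin n) k) R := hgf
  haveI : Module.Finite R S := hfin
  haveI : FaithfulSMul (MvPolynomial (Fin n) k) R :=
    (faithfulSMul_iff_algebraMap_injective _ _).2 hg
  haveI : FaithfulSMul R S := (faithfulSMul_iff_algebraMap_injective _ _).2 hdom
  haveI : FaithfulSMul (MvPolynomial (Fin n) k) S :=
    (faithfulSMul_iff_algebraMap_injective _ _).2 (hdom.comp hg)
  letI : Algebra (FractionRing (MvPolynomial (Fin n) k)) (FractionRing R) :=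
    FractionRing.liftAlgebra _ _
  letI : Algebra (FractionRing (MvPolynomial (Fin n) k)) (FractionRing S) :=
    FractionRing.liftAlgebra _ _
  letI : Algebra (FractionRing R) (FractionRing S) := RingHom.toAlgebra
    (IsFractionRing.lift
        (g := ((algebraMap S (FractionRing S)).comp (φ : R →+* S)))
        ((IsFractionRing.injective S (FractionRing S)).comp hdom))
  haveI : IsScalarTower (MvPolynomial (Fin n) k) (FractionRing (MvPolynomial (Fin n) k))
      (FractionRing R) := FractionRing.isScalarTower_liftAlgebra _ _
  haveI : IsScalarTower (MvPolynomial (Fin n) k) (FractionRing (MvPolynomial (Fin n) k))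
      (FractionRing S) := FractionRing.isScalarTower_liftAlgebra _ _
  have hRS : ∀ r : R, algebraMap (FractionRing R) (FractionRing S) (algebraMap R _ r) =
      algebraMap S (FractionRing S) (φ r) := fun r =>
    IsFractionRing.lift_algebraMap
      (g := ((algebraMap S (FractionRing S)).comp (φ : R →+* S)))
      ((IsFractionRing.injective S (FractionRing S)).comp hdom) r
  haveI : IsScalarTower (FractionRing (MvPolynomial (Fin n) k)) (FractionRing R)
      (FractionRing S) := by
    apply IsScalarTower.of_algebraMap_eq'
    apply IsLocalization.ringHom_ext (nonZeroDivisors (MvPolynomial (Fin n) k))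
    refine RingHom.ext fun b => ?_
    simp only [RingHom.comp_apply]
    rw [← IsScalarTower.algebraMap_apply (MvPolynomial (Fin n) k) _ (FractionRing S),
      ← IsScalarTower.algebraMap_apply (MvPolynomial (Fin n) k) _ (FractionRing R),
      IsScalarTower.algebraMap_apply (MvPolynomial (Fin n) k) R (FractionRing R), hRS,
      IsScalarTower.algebraMap_apply (MvPolynomial (Fin n) k) S (FractionRing S)]
    rfl
  have key := HilbAux.finrank_core hk n R S (FractionRing (MvPolynomial (Fin n) k))
    (FractionRing R) (FractionRing S) (by
      intro h _ _ _ ψ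
      obtain ⟨χ, hχ⟩ := hsurj h ψ
      exact ⟨χ, fun r => DFunLike.congr_fun hχ r⟩)
  exact Algebra.finrank_eq_one_iff_bijective_algebraMap.1 key
end
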